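/- arXiv:1507.03258 — 6 statements merged into one kernel-verified Lean document; each statement's English description precedes it below -/
import Mathlib

section
/- For every d > 0 and c ≥ 1, setting q := 2/d + 1, there exist ε₀ > 0 and c′ > 0 (depending only on d and c) with the following property: if 0 < ε ≤ ε₀, F ≥ 1, s₀ > 0, and s^d F ≤ c ( ε + s^{d+2} F^q ) holds for all s ∈ [0, s₀], then s₀^d F ≤ c′ ε. -/
/-!
In the variable `t = s F^{1/d}` the hypothesis reads `t^d (1 - c t²) ≤ c ε` for all
`t ∈ [0, s₀ F^{1/d}]`. Let `T = (2c)^{-1/2}`, so that `1 - c t² ≥ 1/2` for `0 ≤ t ≤ T`, and there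
`t^d ≤ 2 c ε`. If `s₀ F^{1/d} ≤ T`, this at `s = s₀` is the claim with `c' = 2c`. Otherwise `T`
itself is an admissible value of `t`, so `T^d ≤ 2 c ε`, which fails once `ε ≤ T^d / (4c)`.
-/

/-- The d-th and (d+2)-th powers of `t = s F^{1/d}`, expressed through `s` and `F`. -/
lemma rescaled_powers {d s F : ℝ} (hd : 0 < d) (hs : 0 < s) (hF : 0 < F) :
    s ^ d * F = (s * F ^ (1 / d)) ^ d ∧
      s ^ (d + 2) * F ^ (2 / d + 1) = (s * F ^ (1 / d)) ^ d * (s * F ^ (1 / d)) ^ 2 := by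
  have hG : 0 < F ^ (1 / d) := Real.rpow_pos_of_pos hF _
  have ht : 0 < s * F ^ (1 / d) := mul_pos hs hG
  constructor
  · rw [Real.mul_rpow hs.le hG.le, ← Real.rpow_mul hF.le, one_div_mul_cancel hd.ne',
      Real.rpow_one]
  · rw [← Real.rpow_natCast (s * F ^ (1 / d)) 2, ← Real.rpow_add ht,
      Real.mul_rpow hs.le hG.le, ← Real.rpow_mul hF.le]
    congr 2
    push_cast
    field_simp
    ring

/-- Below the threshold `c t² ≤ 1/2` the higher-order term is absorbed into the left-hand side. -/
lemma absorb {d c ε s F : ℝ} (hd : 0 < d) (hs : 0 < s) (hF : 0 < F)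
    (h : s ^ d * F ≤ c * (ε + s ^ (d + 2) * F ^ (2 / d + 1)))
    (ht : c * (s * F ^ (1 / d)) ^ 2 ≤ 1 / 2) : (s * F ^ (1 / d)) ^ d ≤ 2 * c * ε := by
  obtain ⟨h₁, h₂⟩ := rescaled_powers hd hs hF
  rw [h₁, h₂] at h
  have hp : 0 ≤ (s * F ^ (1 / d)) ^ d := by positivity
  nlinarith [mul_le_mul_of_nonneg_left ht hp]

/-- The elementary root-trapping estimate from Case 2 of the proof of the Heinz trick
(Lemma A.1 of the paper): if `s^d F ≤ c (ε + s^{d+2} F^q)` for all `s ∈ [0, s₀]`,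
with `q = 2/d + 1`, `F ≥ 1` and `ε ≤ ε₀` small, then `s₀^d F ≤ c′ ε`. -/
theorem root_trapping (d c : ℝ) (hd : 0 < d) (hc : 1 ≤ c) :
    ∃ ε₀ > (0:ℝ), ∃ c' > (0:ℝ),
      ∀ ε F s₀ : ℝ, 0 < ε → ε ≤ ε₀ → 1 ≤ F → 0 < s₀ →
        (∀ s ∈ Set.Icc (0:ℝ) s₀, s ^ d * F ≤ c * (ε + s ^ (d + 2) * F ^ (2 / d + 1))) →
        s₀ ^ d * F ≤ c' * ε := by
  have hc0 : 0 < c := by linarith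
  obtain ⟨T, hT, hcT⟩ : ∃ T : ℝ, 0 < T ∧ c * T ^ 2 = 1 / 2 := by
    refine ⟨√(1 / (2 * c)), by positivity, ?_⟩
    rw [Real.sq_sqrt (by positivity)]
    field_simp
  have hTd : 0 < T ^ d := Real.rpow_pos_of_pos hT d
  refine ⟨T ^ d / (4 * c), by positivity, 2 * c, by positivity, ?_⟩
  intro ε F s₀ _ hε₀ hF hs₀ h
  have hF0 : 0 < F := by linarith
  have hG : 0 < F ^ (1 / d) := Real.rpow_pos_of_pos hF0 _
  rcases le_or_gt (s₀ * F ^ (1 / d)) T with hle | hlt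
  · rw [(rescaled_powers hd hs₀ hF0).1]
    refine absorb hd hs₀ hF0 (h s₀ ⟨hs₀.le, le_rfl⟩) ?_
    rw [← hcT]
    gcongr
  · exfalso
    have hs : 0 < T / F ^ (1 / d) := by positivity
    have hsT : T / F ^ (1 / d) * F ^ (1 / d) = T := div_mul_cancel₀ T hG.ne'
    have key := absorb hd hs hF0 (h _ ⟨hs.le, ((div_lt_iff₀ hG).2 hlt).le⟩)
      (by rw [hsT, hcT])
    rw [hsT] at key
    rw [le_div_iff₀ (by positivity)] at hε₀
    linarith
end

section
/- Let u be a Fueter map defined on an open subset of ℝ³ containing the closed ball B̄_r(x). Then for all 0 < s < r, (1/r) ∫_{B_r(x)} |du|² − (1/s) ∫_{B_s(x)} |du|² = 2 ∫_{B_r(x) ∖ B_s(x)} ρ(y)^{−1} |∂_ρ u(y)|² dy, where ρ(y) = |y − x| and ∂_ρ u(y) denotes the directional derivative of u at y in the radial direction (y − x)/|y − x|. -/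
/-!
A Fueter map is harmonic: the square of the Fueter operator is minus the Laplacian
(`laplacian_eq_zero`). Hence its stress-energy tensor `T_ab = ½|du|² δ_ab - ⟪∂_a u, ∂_b u⟫` is
divergence-free, and its contraction with the position field `y - x` is a vector field `W`
(`current`) with `div W = ½|du|²` (`current_div`).

Instead of differentiating the energy of `B_r(x)` in `r`, which would need integrals over spheres,
the proof integrates `div (φ W)` once over `ℝ³`, for the Lipschitz weight
`φ = 1/r - 1/max(s, min(|y - x|, r))` (`weight`), which vanishes outside `B_r(x)`.
Since `∇φ = |y - x|⁻³ (y - x)` on the annulus and `∇φ = 0` off it, `∫ φ div W = -∫ ∇φ · W` reads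
`½ [r⁻¹ ∫_{B_r} |du|² - s⁻¹ ∫_{B_s} |du|² - ∫_A ρ⁻¹ |du|²] = -∫_A (½ ρ⁻¹ |du|² - ρ⁻¹ |∂_ρ u|²)`
with `A` the annulus, and the two integrals of `ρ⁻¹ |du|²` cancel. Integration by parts against a
function that is only Lipschitz comes from the Rademacher theory
(`LipschitzWith.integral_lineDeriv_mul_eq`); it requires a globally defined `W` of compact support,
so `u` is first multiplied by a bump function equal to `1` on the closed ball (`exists_cutoff`).
-/

open MeasureTheory Metric

/-- The source: Euclidean `ℝ³`. -/
abbrev E3 := EuclideanSpace ℝ (Fin 3)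

/-- The imaginary quaternion units. -/
noncomputable def qi : Quaternion ℝ := ⟨0, 1, 0, 0⟩
noncomputable def qj : Quaternion ℝ := ⟨0, 0, 1, 0⟩
noncomputable def qk : Quaternion ℝ := ⟨0, 0, 0, 1⟩

/-- The partial derivative of `u` in the `a`-th coordinate direction. -/
noncomputable def pd (u : E3 → Quaternion ℝ) (a : Fin 3) (y : E3) : Quaternion ℝ :=
  fderiv ℝ u y (EuclideanSpace.single a 1)

/-- `u` is a Fueter map on the open set `U`: it is smooth and satisfies
`i ∂₁u + j ∂₂u + k ∂₃u = 0` on `U`. -/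
def IsFueterOn (u : E3 → Quaternion ℝ) (U : Set E3) : Prop :=
  ContDiffOn ℝ (⊤ : ℕ∞) u U ∧
    ∀ y ∈ U, qi * pd u 0 y + qj * pd u 1 y + qk * pd u 2 y = 0

/-- The energy density `|du|² = |∂₁u|² + |∂₂u|² + |∂₃u|²`. -/
noncomputable def eDensity (u : E3 → Quaternion ℝ) (y : E3) : ℝ :=
  ‖pd u 0 y‖ ^ 2 + ‖pd u 1 y‖ ^ 2 + ‖pd u 2 y‖ ^ 2

/-- The radial derivative `∂_ρ u (y)` of `u` at `y`, in the unit radial direction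
emanating from `x`. -/
noncomputable def radialDeriv (u : E3 → Quaternion ℝ) (x y : E3) : Quaternion ℝ :=
  fderiv ℝ u y (‖y - x‖⁻¹ • (y - x))

open scoped RealInnerProductSpace

/-- The coordinate direction `e_b` of `ℝ³`. -/
noncomputable def dir (b : Fin 3) : E3 := EuclideanSpace.single b 1

/-- The second derivative `∂_b ∂_a v`. -/
noncomputable def pd2 (v : E3 → Quaternion ℝ) (b a : Fin 3) (y : E3) : Quaternion ℝ :=
  fderiv ℝ (fderiv ℝ v) y (dir b) (dir a)

/-- The energy current: the `b`-th component of the contraction of the stress-energy tensor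
`½|dv|² δ_ab - ⟪∂_a v, ∂_b v⟫` with the position field `y - x`. -/
noncomputable def current (v : E3 → Quaternion ℝ) (x : E3) (b : Fin 3) (y : E3) : ℝ :=
  1 / 2 * eDensity v y * (y - x) b - ⟪fderiv ℝ v y (y - x), pd v b y⟫

/-- The Lipschitz weight: `1/r - 1/s` inside `B_s(x)`, `1/r - 1/|y - x|` on the annulus, and `0`
outside `B_r(x)`. -/
noncomputable def weight (x : E3) (s r : ℝ) (y : E3) : ℝ :=
  r⁻¹ - (max s (min ‖y - x‖ r))⁻¹

/-! ### Second derivatives and harmonicity -/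

lemma sum_dir (z : E3) : z = z 0 • dir 0 + z 1 • dir 1 + z 2 • dir 2 := by
  ext i
  fin_cases i <;> simp [dir]

lemma pd_hasLineDerivAt {v : E3 → Quaternion ℝ} (hv : ContDiff ℝ (⊤ : ℕ∞) v)
    (y : E3) (a b : Fin 3) : HasLineDerivAt ℝ (pd v a) (pd2 v b a y) y (dir b) := by
  have h1 : HasFDerivAt (fderiv ℝ v) (fderiv ℝ (fderiv ℝ v) y) y :=
    ((hv.fderiv_right (m := 1) (by norm_cast)).differentiable (by simp)).differentiableAt.hasFDerivAt
  have hl : HasLineDerivAt ℝ (fderiv ℝ v) (fderiv ℝ (fderiv ℝ v) y (dir b)) y (dir b) :=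
    h1.hasLineDerivAt (dir b)
  have h2 := HasDerivAt.clm_apply (show HasDerivAt _ _ _ from hl) (hasDerivAt_const (0 : ℝ) (dir a))
  simpa [HasLineDerivAt, pd, pd2, dir] using h2

lemma pd2_symm {v : E3 → Quaternion ℝ} (hv : ContDiff ℝ (⊤ : ℕ∞) v)
    (y : E3) (a b : Fin 3) : pd2 v b a y = pd2 v a b y :=
  (hv.contDiffAt.isSymmSndFDerivAt (by simp; norm_cast)) (dir b) (dir a)

/-- Applying the Fueter operator twice gives minus the Laplacian, so Fueter maps are harmonic. -/
lemma laplacian_eq_zero {v : E3 → Quaternion ℝ} (hv : ContDiff ℝ (⊤ : ℕ∞) v) {V : Set E3}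
    (hV : IsOpen V) (hF : ∀ y ∈ V, qi * pd v 0 y + qj * pd v 1 y + qk * pd v 2 y = 0)
    {y : E3} (hy : y ∈ V) : pd2 v 0 0 y + pd2 v 1 1 y + pd2 v 2 2 y = 0 := by
  have key : ∀ c : Fin 3,
      qi * pd2 v c 0 y + qj * pd2 v c 1 y + qk * pd2 v c 2 y = 0 := by
    intro c
    have h : HasLineDerivAt ℝ (fun y => qi * pd v 0 y + qj * pd v 1 y + qk * pd v 2 y)
        (qi * pd2 v c 0 y + qj * pd2 v c 1 y + qk * pd2 v c 2 y) y (dir c) :=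
      (((pd_hasLineDerivAt hv y 0 c).const_mul qi).add
        ((pd_hasLineDerivAt hv y 1 c).const_mul qj)).add
        ((pd_hasLineDerivAt hv y 2 c).const_mul qk)
    have h0 : (fun y => qi * pd v 0 y + qj * pd v 1 y + qk * pd v 2 y) =ᶠ[nhds y]
        fun _ => (0 : Quaternion ℝ) := by
      filter_upwards [hV.mem_nhds hy] with z hz using hF z hz
    exact (h.congr_of_eventuallyEq h0.symm).unique (by simpa using
      (hasFDerivAt_const (0 : Quaternion ℝ) y).hasLineDerivAt (𝕜 := ℝ) (dir c))
  have k0 := key 0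
  have k1 := key 1
  have k2 := key 2
  rw [pd2_symm hv y 0 1] at k1
  rw [pd2_symm hv y 0 2, pd2_symm hv y 1 2] at k2
  simp only [Quaternion.ext_iff, Quaternion.re_add, Quaternion.imI_add,
    Quaternion.imJ_add, Quaternion.imK_add, Quaternion.re_mul, Quaternion.imI_mul,
    Quaternion.imJ_mul, Quaternion.imK_mul, Quaternion.re_zero, Quaternion.imI_zero,
    Quaternion.imJ_zero, Quaternion.imK_zero] at k0 k1 k2 ⊢
  simp only [qi, qj, qk] at k0 k1 k2
  refine ⟨?_, ?_, ?_, ?_⟩ <;> linarith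

/-! ### The energy current -/

lemma current_contDiff {v : E3 → Quaternion ℝ} (hv : ContDiff ℝ (⊤ : ℕ∞) v) (x : E3) (b : Fin 3) :
    ContDiff ℝ 1 (current v x b) := by
  have hD : ContDiff ℝ 1 (fderiv ℝ v) := hv.fderiv_right (by norm_cast)
  have hp : ∀ a, ContDiff ℝ 1 (pd v a) := fun a => hD.clm_apply contDiff_const
  have hz : ContDiff ℝ 1 (fun y : E3 => (y - x) b) :=
    (EuclideanSpace.proj b : E3 →L[ℝ] ℝ).contDiff.comp (contDiff_id.sub contDiff_const)
  have hE : ContDiff ℝ 1 (eDensity v) :=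
    (((hp 0).norm_sq ℝ).add ((hp 1).norm_sq ℝ)).add ((hp 2).norm_sq ℝ)
  exact ((contDiff_const.mul hE).mul hz).sub
    ((hD.clm_apply (contDiff_id.sub contDiff_const)).inner ℝ (hp b))

lemma current_hasCompactSupport {v : E3 → Quaternion ℝ} (hc : HasCompactSupport v)
    (x : E3) (b : Fin 3) : HasCompactSupport (current v x b) := by
  refine (hc.fderiv ℝ).mono fun y hy => ?_
  contrapose! hy
  have : fderiv ℝ v y = 0 := by simpa using hy
  simp [current, eDensity, pd, this]

lemma eDensity_continuous {v : E3 → Quaternion ℝ} (hv : ContDiff ℝ (⊤ : ℕ∞) v) :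
    Continuous (eDensity v) := by
  have hD : Continuous (fderiv ℝ v) := hv.continuous_fderiv (by simp)
  unfold eDensity pd
  fun_prop

/-- Product rule for `∂_b` of the `b`-th component of the current. -/
lemma current_hasLineDerivAt {v : E3 → Quaternion ℝ} (hv : ContDiff ℝ (⊤ : ℕ∞) v)
    (x y : E3) (b : Fin 3) :
    HasLineDerivAt ℝ (current v x b)
      ((⟪pd v 0 y, pd2 v b 0 y⟫ + ⟪pd v 1 y, pd2 v b 1 y⟫ + ⟪pd v 2 y, pd2 v b 2 y⟫) * (y - x) b
        + 1 / 2 * eDensity v y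
        - (⟪fderiv ℝ v y (y - x), pd2 v b b y⟫
          + ⟪fderiv ℝ (fderiv ℝ v) y (dir b) (y - x) + pd v b y, pd v b y⟫)) y (dir b) := by
  have h1 : HasFDerivAt (fderiv ℝ v) (fderiv ℝ (fderiv ℝ v) y) y :=
    ((hv.fderiv_right (m := 1) (by norm_cast)).differentiable (by simp)).differentiableAt.hasFDerivAt
  have hz : HasDerivAt (fun t : ℝ => y + t • dir b - x) (dir b) 0 := by
    simpa using (((hasDerivAt_id (0 : ℝ)).smul_const (dir b)).const_add y).sub_const x
  have hzb : HasDerivAt (fun t : ℝ => (y + t • dir b - x) b) 1 0 := by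
    have := (EuclideanSpace.proj b : E3 →L[ℝ] ℝ).hasFDerivAt.comp_hasDerivAt (0 : ℝ) hz
    simpa [dir, Function.comp_def] using this
  have hl : HasLineDerivAt ℝ (fderiv ℝ v) (fderiv ℝ (fderiv ℝ v) y (dir b)) y (dir b) :=
    h1.hasLineDerivAt (dir b)
  have hR := HasDerivAt.clm_apply (show HasDerivAt _ _ _ from hl) hz
  have hp := fun a => pd_hasLineDerivAt hv y a b
  have hE : HasDerivAt (fun t : ℝ => eDensity v (y + t • dir b)) _ 0 :=
    ((HasDerivAt.norm_sq (hp 0)).add (HasDerivAt.norm_sq (hp 1))).add (HasDerivAt.norm_sq (hp 2))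
  have := ((hE.const_mul (1 / 2)).mul hzb).sub (hR.inner ℝ (hp b))
  refine HasDerivAt.congr_deriv (f := fun t : ℝ => current v x b (y + t • dir b)) this ?_
  simp only [zero_smul, add_zero, mul_one]
  simp only [pd, dir]
  ring

/-- The divergence of the energy current of a harmonic map: the stress-energy tensor is
divergence-free, and its trace is `½|dv|²`. -/
lemma current_div {v : E3 → Quaternion ℝ} (hv : ContDiff ℝ (⊤ : ℕ∞) v) (x y : E3)
    (hL : pd2 v 0 0 y + pd2 v 1 1 y + pd2 v 2 2 y = 0) :
    lineDeriv ℝ (current v x 0) y (dir 0) + lineDeriv ℝ (current v x 1) y (dir 1)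
      + lineDeriv ℝ (current v x 2) y (dir 2) = 1 / 2 * eDensity v y := by
  simp only [(current_hasLineDerivAt hv x y _).lineDeriv]
  have hb : ∀ b, fderiv ℝ (fderiv ℝ v) y (dir b) (y - x) =
      (y - x) 0 • pd2 v 0 b y + (y - x) 1 • pd2 v 1 b y + (y - x) 2 • pd2 v 2 b y := by
    intro b
    conv_lhs => rw [sum_dir (y - x)]
    simp only [map_add, map_smul]
    rw [pd2_symm hv y b 0, pd2_symm hv y b 1, pd2_symm hv y b 2]
    rfl
  have hLap : ⟪fderiv ℝ v y (y - x), pd2 v 0 0 y⟫ + ⟪fderiv ℝ v y (y - x), pd2 v 1 1 y⟫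
      + ⟪fderiv ℝ v y (y - x), pd2 v 2 2 y⟫ = 0 := by
    rw [← inner_add_right, ← inner_add_right, hL, inner_zero_right]
  rw [hb, hb, hb]
  simp only [inner_add_left, real_inner_smul_left, real_inner_self_eq_norm_sq, eDensity]
  simp only [real_inner_comm (pd v _ y)]
  linear_combination -hLap

/-! ### The Lipschitz weight -/

lemma weight_lipschitz (x : E3) {s r : ℝ} (hs : 0 < s) :
    ∃ C, LipschitzWith C (weight x s r) := by
  refine ⟨Real.toNNReal (s⁻¹ * s⁻¹), LipschitzWith.of_dist_le_mul fun y z => ?_⟩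
  rw [Real.coe_toNNReal _ (by positivity), Real.dist_eq]
  unfold weight
  set a := max s (min ‖y - x‖ r)
  set c := max s (min ‖z - x‖ r)
  have ha : s ≤ a := le_max_left _ _
  have hc : s ≤ c := le_max_left _ _
  have hac : |a - c| ≤ dist y z := by
    calc |a - c| ≤ |min ‖y - x‖ r - min ‖z - x‖ r| := by
          simpa using abs_max_sub_max_le_max s (min ‖y - x‖ r) s (min ‖z - x‖ r)
      _ ≤ |‖y - x‖ - ‖z - x‖| := by
          simpa using abs_min_sub_min_le_max ‖y - x‖ r ‖z - x‖ r
      _ ≤ ‖(y - x) - (z - x)‖ := abs_norm_sub_norm_le _ _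
      _ = dist y z := by rw [sub_sub_sub_cancel_right, dist_eq_norm]
  have ha0 := hs.trans_le ha
  have hc0 := hs.trans_le hc
  have : r⁻¹ - a⁻¹ - (r⁻¹ - c⁻¹) = a⁻¹ * c⁻¹ * (a - c) := by field_simp; ring
  rw [this, abs_mul, abs_of_pos (by positivity)]
  gcongr

lemma weight_hasLineDerivAt_annulus {x y : E3} {s r : ℝ} (hs : 0 < s) (h1 : s < ‖y - x‖)
    (h2 : ‖y - x‖ < r) (b : Fin 3) :
    HasLineDerivAt ℝ (weight x s r) ((‖y - x‖⁻¹) ^ 3 * (y - x) b) y (dir b) := by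
  have hpos : 0 < ‖y - x‖ := hs.trans h1
  have hz : HasDerivAt (fun t : ℝ => y + t • dir b - x) (dir b) 0 := by
    simpa using (((hasDerivAt_id (0 : ℝ)).smul_const (dir b)).const_add y).sub_const x
  have hn := (hz.norm_sq.sqrt (by simpa using hpos.ne')).inv (by simpa using hpos.ne')
  have h : HasLineDerivAt ℝ (fun y : E3 => r⁻¹ - ‖y - x‖⁻¹)
      ((‖y - x‖⁻¹) ^ 3 * (y - x) b) y (dir b) := by
    unfold HasLineDerivAt
    convert hn.const_sub r⁻¹ using 1
    · ext t; simp [Real.sqrt_sq]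
    · simp [Real.sqrt_sq, dir, EuclideanSpace.inner_single_right]
      field_simp
  refine h.congr_of_eventuallyEq ?_
  have hc : Continuous fun y : E3 => ‖y - x‖ := by fun_prop
  filter_upwards [hc.continuousAt.eventually (lt_mem_nhds h1),
    hc.continuousAt.eventually (gt_mem_nhds h2)] with z h3 h4
  simp [weight, min_eq_left h4.le, max_eq_right h3.le]

lemma weight_lineDeriv_off {x y : E3} {s r : ℝ} (hsr : s < r)
    (h : ‖y - x‖ < s ∨ r < ‖y - x‖) (b : Fin 3) :
    lineDeriv ℝ (weight x s r) y (dir b) = 0 := by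
  have hc : Continuous fun y : E3 => ‖y - x‖ := by fun_prop
  have : ∃ c : ℝ, weight x s r =ᶠ[nhds y] fun _ => c := by
    rcases h with h | h
    · refine ⟨r⁻¹ - s⁻¹, ?_⟩
      filter_upwards [hc.continuousAt.eventually (gt_mem_nhds h)] with z hz
      simp [weight, min_eq_left (hz.trans hsr).le, max_eq_left hz.le]
    · refine ⟨0, ?_⟩
      filter_upwards [hc.continuousAt.eventually (lt_mem_nhds h)] with z hz
      simp [weight, min_eq_right hz.le, max_eq_right hsr.le]
  obtain ⟨c, hc⟩ := this
  have h1 := ((hasFDerivAt_const c y).hasLineDerivAt (𝕜 := ℝ) (dir b)).congr_of_eventuallyEq hc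
  simpa using h1.lineDeriv

/-! ### Integration -/

/-- Contracting the energy current with `∇(-1/|y - x|)` produces the radial derivative. -/
lemma current_radial (v : E3 → Quaternion ℝ) {x y : E3} (hy : 0 < ‖y - x‖) :
    (‖y - x‖⁻¹) ^ 3 * (y - x) 0 * current v x 0 y + (‖y - x‖⁻¹) ^ 3 * (y - x) 1 * current v x 1 y
      + (‖y - x‖⁻¹) ^ 3 * (y - x) 2 * current v x 2 y
      = 1 / 2 * (‖y - x‖⁻¹ * eDensity v y) - ‖y - x‖⁻¹ * ‖radialDeriv v x y‖ ^ 2 := by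
  have hn : ‖y - x‖ ^ 2 = (y - x) 0 ^ 2 + (y - x) 1 ^ 2 + (y - x) 2 ^ 2 := by
    rw [EuclideanSpace.real_norm_sq_eq, Fin.sum_univ_three]
  have hR : ⟪fderiv ℝ v y (y - x), fderiv ℝ v y (y - x)⟫ = (y - x) 0 * ⟪fderiv ℝ v y (y - x), pd v 0 y⟫
      + (y - x) 1 * ⟪fderiv ℝ v y (y - x), pd v 1 y⟫
      + (y - x) 2 * ⟪fderiv ℝ v y (y - x), pd v 2 y⟫ := by
    conv_lhs => enter [3]; rw [sum_dir (y - x)]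
    simp only [map_add, map_smul, inner_add_right, real_inner_smul_right]
    rfl
  have hrad : ‖radialDeriv v x y‖ ^ 2
      = (‖y - x‖⁻¹) ^ 2 * ⟪fderiv ℝ v y (y - x), fderiv ℝ v y (y - x)⟫ := by
    rw [radialDeriv, map_smul, norm_smul, mul_pow, real_inner_self_eq_norm_sq]
    simp
  rw [hrad, hR]
  simp only [current]
  have hi : (‖y - x‖⁻¹) ^ 3 * ‖y - x‖ ^ 2 = ‖y - x‖⁻¹ := by field_simp
  linear_combination (1 / 2 * eDensity v y) * hi - (1 / 2 * eDensity v y * (‖y - x‖⁻¹) ^ 3) * hn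

/-- Divergence theorem for the Lipschitz field `weight • current`. -/
lemma weighted_identity {v : E3 → Quaternion ℝ} (hv : ContDiff ℝ (⊤ : ℕ∞) v)
    (hc : HasCompactSupport v) (x : E3) {s r : ℝ} (hs : 0 < s) :
    ∫ y, (lineDeriv ℝ (weight x s r) y (dir 0) * current v x 0 y
        + lineDeriv ℝ (weight x s r) y (dir 1) * current v x 1 y
        + lineDeriv ℝ (weight x s r) y (dir 2) * current v x 2 y)
      = - ∫ y, (lineDeriv ℝ (current v x 0) y (dir 0) + lineDeriv ℝ (current v x 1) y (dir 1)
        + lineDeriv ℝ (current v x 2) y (dir 2)) * weight x s r y := by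
  obtain ⟨C, hC⟩ := weight_lipschitz x (r := r) hs
  have hW : ∀ b, ContDiff ℝ 1 (current v x b) := fun b => current_contDiff hv x b
  have hWc : ∀ b, HasCompactSupport (current v x b) := fun b => current_hasCompactSupport hc x b
  have hI1 : ∀ b, Integrable (fun y => lineDeriv ℝ (weight x s r) y (dir b) * current v x b y) :=
    fun b => ((hW b).continuous.integrable_of_hasCompactSupport (hWc b)).mul_of_top_right
      (hC.memLp_lineDeriv (dir b))
  have hf : ∀ b y w, lineDeriv ℝ (current v x b) y w = fderiv ℝ (current v x b) y w :=
    fun b y w => ((hW b).differentiable (by simp)).differentiableAt.lineDeriv_eq_fderiv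
  have hI2 : ∀ b, Integrable (fun y => fderiv ℝ (current v x b) y (dir b) * weight x s r y) := by
    intro b
    refine Continuous.integrable_of_hasCompactSupport ?_ ?_
    · exact (((hW b).continuous_fderiv (by simp)).clm_apply continuous_const).mul hC.continuous
    · exact ((hWc b).fderiv_apply ℝ (dir b)).mul_right
  have key : ∀ b, ∫ y, lineDeriv ℝ (weight x s r) y (dir b) * current v x b y
      = - ∫ y, fderiv ℝ (current v x b) y (dir b) * weight x s r y := by
    intro b
    obtain ⟨D, hD⟩ := ContDiff.lipschitzWith_of_hasCompactSupport (hWc b) (hW b) (by simp)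
    rw [hC.integral_lineDeriv_mul_eq hD (hWc b), ← integral_neg]
    simp only [hf, map_neg, neg_mul]
  simp only [hf, add_mul]
  have hJ1 : Integrable (fun y => lineDeriv ℝ (weight x s r) y (dir 0) * current v x 0 y
      + lineDeriv ℝ (weight x s r) y (dir 1) * current v x 1 y) := (hI1 0).add (hI1 1)
  have hJ2 : Integrable (fun y => fderiv ℝ (current v x 0) y (dir 0) * weight x s r y
      + fderiv ℝ (current v x 1) y (dir 1) * weight x s r y) := (hI2 0).add (hI2 1)
  rw [integral_add hJ1 (hI1 2), integral_add (hI1 0) (hI1 1),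
    integral_add hJ2 (hI2 2), integral_add (hI2 0) (hI2 1), key, key, key]
  ring

/-- The monotonicity formula for a globally defined map that satisfies the Fueter equation on the
ball, from `weighted_identity`: `hL` computes the side with the gradient of the weight, `hR` the
side with the divergence of the current. -/
lemma monotonicity_of_compactSupport {v : E3 → Quaternion ℝ} (hv : ContDiff ℝ (⊤ : ℕ∞) v)
    (hc : HasCompactSupport v) (x : E3) {s r : ℝ} (hs : 0 < s) (hsr : s < r)
    (hF : ∀ y ∈ ball x r, qi * pd v 0 y + qj * pd v 1 y + qk * pd v 2 y = 0) :
    (1 / r) * (∫ y in ball x r, eDensity v y) - (1 / s) * (∫ y in ball x s, eDensity v y) =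
      2 * ∫ y in ball x r \ ball x s, ‖y - x‖⁻¹ * ‖radialDeriv v x y‖ ^ 2 := by
  have hA : MeasurableSet (ball x r \ ball x s) := measurableSet_ball.diff measurableSet_ball
  have hEc := eDensity_continuous hv
  have hAK : ball x r \ ball x s ⊆ closedBall x r \ ball x s :=
    Set.sdiff_subset_sdiff_left ball_subset_closedBall
  have hK : IsCompact (closedBall x r \ ball x s) := (isCompact_closedBall x r).diff isOpen_ball
  have hinv : ContinuousOn (fun y : E3 => ‖y - x‖⁻¹) (closedBall x r \ ball x s) := by
    refine ContinuousOn.inv₀ (by fun_prop) fun y hy => ?_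
    have : s ≤ ‖y - x‖ := by simpa [dist_eq_norm] using hy.2
    exact (hs.trans_le this).ne'
  have hIE : IntegrableOn (fun y => ‖y - x‖⁻¹ * eDensity v y) (ball x r \ ball x s) :=
    ((hinv.mul hEc.continuousOn).integrableOn_compact hK).mono_set hAK
  have hIR : IntegrableOn (fun y => ‖y - x‖⁻¹ * ‖radialDeriv v x y‖ ^ 2) (ball x r \ ball x s) := by
    refine (ContinuousOn.integrableOn_compact hK ?_).mono_set hAK
    refine hinv.mul (ContinuousOn.pow (ContinuousOn.norm ?_) 2)
    exact (hv.continuous_fderiv (by simp)).continuousOn.clm_apply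
      (hinv.smul (by fun_prop))
  have hIB : ∀ t, IntegrableOn (eDensity v) (ball x t) := fun t =>
    (hEc.continuousOn.integrableOn_compact (isCompact_closedBall x t)).mono_set
      ball_subset_closedBall
  have hid := weighted_identity hv hc x (r := r) hs
  have hL : ∫ y, (lineDeriv ℝ (weight x s r) y (dir 0) * current v x 0 y
        + lineDeriv ℝ (weight x s r) y (dir 1) * current v x 1 y
        + lineDeriv ℝ (weight x s r) y (dir 2) * current v x 2 y)
      = 1 / 2 * (∫ y in ball x r \ ball x s, ‖y - x‖⁻¹ * eDensity v y)
        - ∫ y in ball x r \ ball x s, ‖y - x‖⁻¹ * ‖radialDeriv v x y‖ ^ 2 := by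
    rw [← integral_const_mul, ← integral_sub (hIE.const_mul _) hIR, ← integral_indicator hA]
    -- The weight has no derivative on the two bounding spheres, which have measure zero.
    refine integral_congr_ae ?_
    have hsph : ∀ t : ℝ, ∀ᵐ y : E3, y ∉ sphere x t := fun t =>
      measure_eq_zero_iff_ae_notMem.1 (Measure.addHaar_sphere volume x t)
    filter_upwards [hsph s, hsph r] with y h1 h2
    simp only [mem_sphere, dist_eq_norm] at h1 h2
    by_cases hy : y ∈ ball x r \ ball x s
    · rw [Set.indicator_of_mem hy]
      have h3 : s < ‖y - x‖ := lt_of_le_of_ne (by simpa [dist_eq_norm] using hy.2) (Ne.symm h1)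
      have h4 : ‖y - x‖ < r := by simpa [dist_eq_norm] using hy.1
      simp only [(weight_hasLineDerivAt_annulus hs h3 h4 _).lineDeriv]
      exact current_radial v (hs.trans h3)
    · rw [Set.indicator_of_notMem hy]
      have : ‖y - x‖ < s ∨ r < ‖y - x‖ := by
        simp only [Set.mem_sdiff, mem_ball, dist_eq_norm, not_and, not_not] at hy
        rcases lt_or_gt_of_ne h2 with h | h
        · exact Or.inl (hy h)
        · exact Or.inr h
      simp [weight_lineDeriv_off hsr this]
  have hR : ∫ y, (lineDeriv ℝ (current v x 0) y (dir 0) + lineDeriv ℝ (current v x 1) y (dir 1)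
        + lineDeriv ℝ (current v x 2) y (dir 2)) * weight x s r y
      = 1 / 2 * (r⁻¹ * (∫ y in ball x r, eDensity v y) - s⁻¹ * (∫ y in ball x s, eDensity v y)
        - ∫ y in ball x r \ ball x s, ‖y - x‖⁻¹ * eDensity v y) := by
    have e1 : ∀ y, (lineDeriv ℝ (current v x 0) y (dir 0) + lineDeriv ℝ (current v x 1) y (dir 1)
        + lineDeriv ℝ (current v x 2) y (dir 2)) * weight x s r y
        = 1 / 2 * ((ball x r).indicator (fun y => r⁻¹ * eDensity v y) y
          - (ball x s).indicator (fun y => s⁻¹ * eDensity v y) y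
          - (ball x r \ ball x s).indicator (fun y => ‖y - x‖⁻¹ * eDensity v y) y) := by
      intro y
      by_cases hyr : ‖y - x‖ < r
      · have hyb : y ∈ ball x r := by simpa [dist_eq_norm] using hyr
        rw [current_div hv x y (laplacian_eq_zero hv isOpen_ball hF hyb)]
        by_cases hys : ‖y - x‖ < s
        · simp [Set.indicator, dist_eq_norm, hyr, hys, weight, min_eq_left hyr.le,
            max_eq_left hys.le]
          ring
        · simp [Set.indicator, dist_eq_norm, hyr, hys, weight, min_eq_left hyr.le,
            max_eq_right (not_lt.1 hys)]
          ring
      · have hys : ¬ ‖y - x‖ < s := fun h => hyr (h.trans hsr)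
        simp [Set.indicator, dist_eq_norm, hyr, hys, weight, min_eq_right (not_lt.1 hyr),
          max_eq_right hsr.le]
    have i1 : Integrable ((ball x r).indicator (fun y => r⁻¹ * eDensity v y)) :=
      (integrable_indicator_iff measurableSet_ball).2 ((hIB r).const_mul _)
    have i2 : Integrable ((ball x s).indicator (fun y => s⁻¹ * eDensity v y)) :=
      (integrable_indicator_iff measurableSet_ball).2 ((hIB s).const_mul _)
    have i3 := (integrable_indicator_iff hA).2 hIE
    have i12 : Integrable (fun y => (ball x r).indicator (fun y => r⁻¹ * eDensity v y) y
        - (ball x s).indicator (fun y => s⁻¹ * eDensity v y) y) := i1.sub i2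
    simp only [e1]
    rw [integral_const_mul, integral_sub i12 i3, integral_sub i1 i2,
      integral_indicator measurableSet_ball, integral_indicator measurableSet_ball,
      integral_indicator hA, integral_const_mul, integral_const_mul]
  rw [hL, hR] at hid
  rw [one_div, one_div]
  linarith

/-- A map smooth near the closed ball can be replaced by a compactly supported smooth map without
changing it on the closed ball. -/
lemma exists_cutoff {u : E3 → Quaternion ℝ} {U : Set E3} (hU : IsOpen U) {x : E3} {r : ℝ}
    (hr : 0 < r) (hball : closedBall x r ⊆ U) (hu : ContDiffOn ℝ (⊤ : ℕ∞) u U) :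
    ∃ v : E3 → Quaternion ℝ, ContDiff ℝ (⊤ : ℕ∞) v ∧ HasCompactSupport v ∧
      ∀ y ∈ closedBall x r, v y = u y := by
  obtain ⟨δ, hδ, hδU⟩ := (isCompact_closedBall x r).exists_cthickening_subset_open hU hball
  rw [cthickening_closedBall hδ.le hr.le] at hδU
  let χ : ContDiffBump x := ⟨r, δ + r, hr, by linarith⟩
  refine ⟨fun y => χ y • u y, ?_, χ.hasCompactSupport.smul_right, fun y hy => ?_⟩
  · refine contDiff_iff_contDiffAt.2 fun y => ?_
    by_cases hy : y ∈ tsupport (fun y => χ y • u y)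
    swap
    · exact contDiffAt_const.congr_of_eventuallyEq (notMem_tsupport_iff_eventuallyEq.1 hy)
    have hyU : y ∈ U := hδU (by
      have := tsupport_smul_subset_left χ u hy
      rwa [χ.tsupport_eq] at this)
    exact χ.contDiffAt.smul (hu.contDiffAt (hU.mem_nhds hyU))
  · simp [χ.one_of_mem_closedBall hy]

/-- The exact monotonicity formula (Proposition 2.2 of the paper) for Fueter maps
with flat target `ℍ`. -/
theorem flat_monotonicity (u : E3 → Quaternion ℝ) (U : Set E3) (hUopen : IsOpen U)
    (x : E3) (r : ℝ) (hball : closedBall x r ⊆ U) (hu : IsFueterOn u U)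
    (s : ℝ) (hs : 0 < s) (hsr : s < r) :
    (1 / r) * (∫ y in ball x r, eDensity u y) - (1 / s) * (∫ y in ball x s, eDensity u y) =
      2 * ∫ y in ball x r \ ball x s, ‖y - x‖⁻¹ * ‖radialDeriv u x y‖ ^ 2 := by
  obtain ⟨v, hv, hc, hvu⟩ := exists_cutoff hUopen (hs.trans hsr) hball hu.1
  have hD : ∀ y ∈ ball x r, fderiv ℝ v y = fderiv ℝ u y := fun y hy =>
    Filter.EventuallyEq.fderiv_eq (by
      filter_upwards [isOpen_ball.mem_nhds hy] with z hz using hvu z (ball_subset_closedBall hz))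
  have hE : ∀ y ∈ ball x r, eDensity v y = eDensity u y := fun y hy => by
    simp only [eDensity, pd, hD y hy]
  have hmain := monotonicity_of_compactSupport hv hc x hs hsr fun y hy => by
    simp only [pd, hD y hy]
    exact hu.2 y (hball (ball_subset_closedBall hy))
  rw [setIntegral_congr_fun measurableSet_ball hE,
    setIntegral_congr_fun measurableSet_ball fun y hy => hE y (ball_subset_ball hsr.le hy)] at hmain
  rw [hmain]
  congr 1
  refine setIntegral_congr_fun (measurableSet_ball.diff measurableSet_ball) fun y hy => ?_
  simp only [radialDeriv, hD y hy.1]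
end

section
/- Let u be a Fueter map defined on an open subset of ℝ³ containing the closed ball B̄_r(x). Then: (a) for all 0 < s ≤ r, (1/s) ∫_{B_s(x)} |du|² ≤ (1/r) ∫_{B_r(x)} |du|²; and (b) if B_s(y) ⊂ B_{r/2}(x), then (1/s) ∫_{B_s(y)} |du|² ≤ (2/r) ∫_{B_r(x)} |du|². -/
/-!
In the flat case the energy density is subharmonic. The Fueter operator `D = i ∂₁ + j ∂₂ + k ∂₃`
has constant coefficients and `D² = -Δ`; hence each `∂ₐu` is again a Fueter map, hence harmonic
(`laplace_zero`), and `|du|² = ∑ₐ |∂ₐu|²` is a sum of subharmonic functions (`laplace_normSq`).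

Averages of a subharmonic function `W` over concentric balls are nondecreasing in the radius
(`mean_monotone`). Indeed `∫_{B_1} W(x + t y) dy` has derivative `∫_{B_1} y · ∇W(x + t y) dy`, and
`y = -½ ∇(1 - |y|²)` with `1 - |y|²` vanishing on the unit sphere, so integrating by parts
(`integral_ball_mul_fderiv`) turns it into `(t/2) ∫_{B_1} (1 - |y|²) ΔW(x + t y) dy ≥ 0`.
Thus `s⁻³ ∫_{B_s(x)} |du|²` is monotone, which implies (a) as the energy is nonnegative.

For (b), the hypothesis forces `s ≤ r/2` and `B_{r/2}(y) ⊆ B_r(x)`; apply (a) at `y` with outer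
radius `r/2`.
-/

open MeasureTheory Metric

open scoped ContDiff

/-! ### Fueter maps are harmonic -/

lemma pd_contDiff {u : E3 → Quaternion ℝ} (hu : ContDiff ℝ ∞ u) (a : Fin 3) :
    ContDiff ℝ ∞ (pd u a) := by
  unfold pd
  exact (hu.fderiv_right (by simp)).clm_apply contDiff_const

lemma pd_comm {u : E3 → Quaternion ℝ} (hu : ContDiff ℝ ∞ u) (a b : Fin 3) (y : E3) :
    pd (pd u a) b y = pd (pd u b) a y := by
  have hd : DifferentiableAt ℝ (fderiv ℝ u) y :=
    ((hu.fderiv_right (m := ∞) (by simp)).differentiable (by simp)) y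
  have key : ∀ c d : Fin 3, pd (pd u c) d y =
      fderiv ℝ (fderiv ℝ u) y (EuclideanSpace.single d 1) (EuclideanSpace.single c 1) := by
    intro c d
    unfold pd
    rw [fderiv_clm_apply hd (by fun_prop)]
    simp
  rw [key, key]
  exact (hu.contDiffAt.isSymmSndFDerivAt (by
    rw [minSmoothness_of_isRCLikeNormedField]
    exact WithTop.coe_le_coe.2 (le_top : (2 : ℕ∞) ≤ ⊤))) _ _

/-- The Fueter operator has constant coefficients, so it commutes with differentiation. -/
lemma pd_fueter {v : E3 → Quaternion ℝ} (hv : ContDiff ℝ ∞ v) (y : E3) (b : Fin 3) :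
    pd (fun z => qi * pd v 0 z + qj * pd v 1 z + qk * pd v 2 z) b y =
      qi * pd (pd v 0) b y + qj * pd (pd v 1) b y + qk * pd (pd v 2) b y := by
  have h : ∀ a, HasFDerivAt (pd v a) (fderiv ℝ (pd v a) y) y := fun a =>
    ((pd_contDiff hv a).differentiable (by simp) y).hasFDerivAt
  have := (((h 0).const_mul qi).add ((h 1).const_mul qj)).add ((h 2).const_mul qk)
  rw [pd]
  erw [this.fderiv]
  simp [pd]

lemma pd_fueter_zero {v : E3 → Quaternion ℝ} (hv : ContDiff ℝ ∞ v) {B : Set E3}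
    (hB : IsOpen B) (h : ∀ y ∈ B, qi * pd v 0 y + qj * pd v 1 y + qk * pd v 2 y = 0)
    {y : E3} (hy : y ∈ B) (b : Fin 3) :
    qi * pd (pd v 0) b y + qj * pd (pd v 1) b y + qk * pd (pd v 2) b y = 0 := by
  rw [← pd_fueter hv]
  have : (fun z => qi * pd v 0 z + qj * pd v 1 z + qk * pd v 2 z) =ᶠ[nhds y] fun _ => 0 := by
    filter_upwards [hB.mem_nhds hy] with z hz using h z hz
  rw [pd, this.fderiv_eq]
  simp

lemma qi_re : qi.re = 0 := rfl
lemma qi_imI : qi.imI = 1 := rfl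
lemma qi_imJ : qi.imJ = 0 := rfl
lemma qi_imK : qi.imK = 0 := rfl
lemma qj_re : qj.re = 0 := rfl
lemma qj_imI : qj.imI = 0 := rfl
lemma qj_imJ : qj.imJ = 1 := rfl
lemma qj_imK : qj.imK = 0 := rfl
lemma qk_re : qk.re = 0 := rfl
lemma qk_imI : qk.imI = 0 := rfl
lemma qk_imJ : qk.imJ = 0 := rfl
lemma qk_imK : qk.imK = 1 := rfl

lemma qi_mul_qi : qi * qi = -1 := by
  apply Quaternion.ext <;> simp [qi_re, qi_imI, qi_imJ, qi_imK] <;> rfl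
lemma qj_mul_qj : qj * qj = -1 := by
  apply Quaternion.ext <;> simp [qj_re, qj_imI, qj_imJ, qj_imK] <;> rfl
lemma qk_mul_qk : qk * qk = -1 := by
  apply Quaternion.ext <;> simp [qk_re, qk_imI, qk_imJ, qk_imK] <;> rfl
lemma qi_mul_qj : qi * qj = qk := by
  ext <;> simp [qi_re, qi_imI, qi_imJ, qi_imK, qj_re, qj_imI, qj_imJ, qj_imK, qk_re, qk_imI, qk_imJ, qk_imK]
lemma qj_mul_qi : qj * qi = -qk := by
  ext <;> simp [qi_re, qi_imI, qi_imJ, qi_imK, qj_re, qj_imI, qj_imJ, qj_imK, qk_re, qk_imI, qk_imJ, qk_imK]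
lemma qj_mul_qk : qj * qk = qi := by
  ext <;> simp [qi_re, qi_imI, qi_imJ, qi_imK, qj_re, qj_imI, qj_imJ, qj_imK, qk_re, qk_imI, qk_imJ, qk_imK]
lemma qk_mul_qj : qk * qj = -qi := by
  ext <;> simp [qi_re, qi_imI, qi_imJ, qi_imK, qj_re, qj_imI, qj_imJ, qj_imK, qk_re, qk_imI, qk_imJ, qk_imK]
lemma qk_mul_qi : qk * qi = qj := by
  ext <;> simp [qi_re, qi_imI, qi_imJ, qi_imK, qj_re, qj_imI, qj_imJ, qj_imK, qk_re, qk_imI, qk_imJ, qk_imK]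
lemma qi_mul_qk : qi * qk = -qj := by
  ext <;> simp [qi_re, qi_imI, qi_imJ, qi_imK, qj_re, qj_imI, qj_imJ, qj_imK, qk_re, qk_imI, qk_imJ, qk_imK]

/-- Solutions of the Fueter equation are harmonic: the Fueter operator squares to minus the
Laplacian. -/
lemma laplace_zero {v : E3 → Quaternion ℝ} (hv : ContDiff ℝ ∞ v) {B : Set E3}
    (hB : IsOpen B) (h : ∀ y ∈ B, qi * pd v 0 y + qj * pd v 1 y + qk * pd v 2 y = 0)
    {y : E3} (hy : y ∈ B) : ∑ a, pd (pd v a) a y = 0 := by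
  -- Apply `i ∂₁ + j ∂₂ + k ∂₃` to the equation; mixed second derivatives cancel since the
  -- units anticommute.
  have h0 := pd_fueter_zero hv hB h hy 0
  have h1 := pd_fueter_zero hv hB h hy 1
  have h2 := pd_fueter_zero hv hB h hy 2
  rw [pd_comm hv 1 0] at h0
  rw [pd_comm hv 2 1] at h1
  rw [pd_comm hv 0 2] at h2
  have hs : qi * (qi * pd (pd v 0) 0 y + qj * pd (pd v 0) 1 y + qk * pd (pd v 2) 0 y)
    + qj * (qi * pd (pd v 0) 1 y + qj * pd (pd v 1) 1 y + qk * pd (pd v 1) 2 y)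
    + qk * (qi * pd (pd v 2) 0 y + qj * pd (pd v 1) 2 y + qk * pd (pd v 2) 2 y) = 0 := by
    rw [h0, h1, h2]; simp
  simp only [mul_add, ← mul_assoc, qi_mul_qi, qj_mul_qj, qk_mul_qk, qi_mul_qj, qj_mul_qi,
    qj_mul_qk, qk_mul_qj, qk_mul_qi, qi_mul_qk] at hs
  rw [Fin.sum_univ_three, ← neg_eq_zero, ← hs]
  noncomm_ring

/-- The squared norm of a harmonic map is subharmonic:
`Δ|v|² = 2⟨v, Δv⟩ + 2 ∑ₐ |∂ₐv|²`. -/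
lemma laplace_normSq {v : E3 → Quaternion ℝ} (hv : ContDiff ℝ ∞ v) {y : E3}
    (h : ∑ a, pd (pd v a) a y = 0) :
    0 ≤ ∑ a : Fin 3, fderiv ℝ (fun z => fderiv ℝ (fun q => ‖v q‖ ^ 2) z
      (EuclideanSpace.single a 1)) y (EuclideanSpace.single a 1) := by
  have h1 : ∀ (a : Fin 3), (fun z => fderiv ℝ (fun q => ‖v q‖ ^ 2) z
      (EuclideanSpace.single a 1)) = fun z => 2 * inner ℝ (v z) (pd v a z) := by
    intro a
    ext z
    have := ((hv.differentiable (by simp) z).hasFDerivAt).norm_sq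
    rw [this.fderiv]
    simp [pd]
  have h2 : ∀ a : Fin 3, fderiv ℝ (fun z => fderiv ℝ (fun q => ‖v q‖ ^ 2) z
      (EuclideanSpace.single a 1)) y (EuclideanSpace.single a 1) =
      2 * (inner ℝ (v y) (pd (pd v a) a y) + ‖pd v a y‖ ^ 2) := by
    intro a
    have hvd := hv.differentiable (by simp) y
    have hpd := (pd_contDiff hv a).differentiable (by simp) y
    rw [h1, fderiv_const_mul (hvd.inner ℝ hpd), smul_apply,
      fderiv_inner_apply ℝ hvd hpd, ← real_inner_self_eq_norm_sq]
    rfl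
  simp_rw [h2]
  rw [← Finset.mul_sum, Finset.sum_add_distrib, ← inner_sum, h, inner_zero_right]
  positivity

/-! ### Averages of subharmonic functions over balls -/

/-- The Lipschitz function `(1 - |y|²)₊`. Its gradient is `-2y` inside the unit ball, and it
vanishes outside, so testing against it replaces the divergence theorem on the ball. -/
noncomputable def hat (y : E3) : ℝ := max 0 (1 - ‖y‖ ^ 2)

lemma hat_lipschitz : LipschitzWith 2 hat := by
  refine LipschitzWith.of_dist_le_mul fun y z => ?_
  have h1 : |‖y‖ - ‖z‖| ≤ dist y z := by
    rw [dist_eq_norm]; exact abs_norm_sub_norm_le y z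
  have key : ∀ a b : ℝ, 0 ≤ a → 0 ≤ b →
      max 0 (1 - a ^ 2) - max 0 (1 - b ^ 2) ≤ 2 * |a - b| := by
    intro a b ha hb
    have := abs_nonneg (a - b)
    have h3 := neg_abs_le (a - b)
    rcases le_total 0 (1 - a ^ 2) with h | h
    · rw [max_eq_right h]
      have ha1 : a ≤ 1 := by nlinarith
      rcases le_total b 1 with hb1 | hb1
      · have : 1 - b ^ 2 ≤ max 0 (1 - b ^ 2) := le_max_right _ _
        nlinarith
      · have : 0 ≤ max 0 (1 - b ^ 2) := le_max_left _ _
        nlinarith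
    · rw [max_eq_left h]
      have : 0 ≤ max 0 (1 - b ^ 2) := le_max_left _ _
      linarith
  have h2 := key ‖y‖ ‖z‖ (norm_nonneg _) (norm_nonneg _)
  have h3 := key ‖z‖ ‖y‖ (norm_nonneg _) (norm_nonneg _)
  rw [abs_sub_comm] at h3
  rw [Real.dist_eq, abs_le]
  simp only [hat, NNReal.coe_ofNat]
  constructor <;> linarith

lemma hat_of_mem {y : E3} (hy : y ∈ ball (0 : E3) 1) : hat y = 1 - ‖y‖ ^ 2 := by
  rw [mem_ball_zero_iff] at hy
  exact max_eq_right (by nlinarith [norm_nonneg y])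

lemma hat_of_notMem {y : E3} (hy : y ∉ ball (0 : E3) 1) : hat y = 0 := by
  rw [mem_ball_zero_iff, not_lt] at hy
  exact max_eq_left (by nlinarith [norm_nonneg y])

lemma lineDeriv_hat_of_mem {y : E3} (hy : y ∈ ball (0 : E3) 1) (v : E3) :
    lineDeriv ℝ hat y v = -2 * inner ℝ y v := by
  have he : hat =ᶠ[nhds y] fun z => 1 - ‖z‖ ^ 2 := by
    filter_upwards [isOpen_ball.mem_nhds hy] with z hz using hat_of_mem hz
  have hd : HasFDerivAt (fun z : E3 => 1 - ‖z‖ ^ 2) _ y :=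
    ((hasFDerivAt_id y).norm_sq).const_sub 1
  rw [((hd.congr_of_eventuallyEq he).hasLineDerivAt v).lineDeriv]
  simp

lemma lineDeriv_hat_of_notMem {y : E3} (hy : y ∉ closedBall (0 : E3) 1) (v : E3) :
    lineDeriv ℝ hat y v = 0 := by
  have he : hat =ᶠ[nhds y] fun z => 0 := by
    filter_upwards [isClosed_closedBall.isOpen_compl.mem_nhds hy] with z hz
      using hat_of_notMem fun h => hz (ball_subset_closedBall h)
  rw [((hasFDerivAt_const (0 : ℝ) y).congr_of_eventuallyEq he |>.hasLineDerivAt v).lineDeriv]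
  simp

/-- Integration by parts on the unit ball against `1 - |y|²`, which has no boundary term. It is
the integration by parts for globally defined Lipschitz functions, applied to `hat`, which is
differentiable off the null set `sphere 0 1`. -/
lemma integral_ball_mul_fderiv {g : E3 → ℝ} (hg : ContDiff ℝ 1 g) (hc : HasCompactSupport g)
    (v : E3) : ∫ y in ball (0 : E3) 1, 2 * inner ℝ y v * g y =
      ∫ y in ball (0 : E3) 1, (1 - ‖y‖ ^ 2) * fderiv ℝ g y v := by
  obtain ⟨D, hD⟩ := ContDiff.lipschitzWith_of_hasCompactSupport hc hg one_ne_zero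
  have h := hat_lipschitz.integral_lineDeriv_mul_eq (μ := volume) hD hc v
  have hs : ∀ᵐ y : E3, y ∉ sphere (0 : E3) 1 :=
    measure_eq_zero_iff_ae_notMem.1 (Measure.addHaar_sphere volume (0 : E3) 1)
  have hl : ∫ y, lineDeriv ℝ hat y v * g y =
      ∫ y in ball (0 : E3) 1, -(2 * inner ℝ y v * g y) := by
    rw [← integral_indicator measurableSet_ball]
    refine integral_congr_ae ?_
    filter_upwards [hs] with y hy
    by_cases hb : y ∈ ball (0 : E3) 1
    · rw [Set.indicator_of_mem hb, lineDeriv_hat_of_mem hb]; ring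
    · rw [Set.indicator_of_notMem hb, lineDeriv_hat_of_notMem, zero_mul]
      rw [← ball_union_sphere]
      exact fun h => h.elim hb hy
  have hr : ∫ y, lineDeriv ℝ g y (-v) * hat y =
      ∫ y in ball (0 : E3) 1, -((1 - ‖y‖ ^ 2) * fderiv ℝ g y v) := by
    rw [← integral_indicator measurableSet_ball]
    congr 1
    ext y
    by_cases hb : y ∈ ball (0 : E3) 1
    · rw [Set.indicator_of_mem hb, hat_of_mem hb,
        ((hg.differentiable one_ne_zero) y).lineDeriv_eq_fderiv, map_neg]
      ring
    · rw [Set.indicator_of_notMem hb, hat_of_notMem hb, mul_zero]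
  rw [hl, hr, integral_neg, integral_neg] at h
  exact neg_injective h

/-- If `ΔV ≥ 0` on the unit ball then `∫ y · ∇V = ½ ∫ (1 - |y|²) ΔV ≥ 0` there. -/
lemma integral_radial_nonneg {V : E3 → ℝ} (hV : ContDiff ℝ ∞ V) (hc : HasCompactSupport V)
    (hsub : ∀ y ∈ ball (0 : E3) 1, 0 ≤ ∑ a : Fin 3, fderiv ℝ (fun z => fderiv ℝ V z
      (EuclideanSpace.single a 1)) y (EuclideanSpace.single a 1)) :
    0 ≤ ∫ y in ball (0 : E3) 1, fderiv ℝ V y y := by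
  set g : Fin 3 → E3 → ℝ := fun a z => fderiv ℝ V z (EuclideanSpace.single a 1) with hgdef
  have hg : ∀ a, ContDiff ℝ 1 (g a) := fun a =>
    ((hV.fderiv_right (m := ∞) (by simp)).clm_apply contDiff_const).of_le (by simp)
  have hgc : ∀ a, HasCompactSupport (g a) := fun a => hc.fderiv_apply ℝ _
  have hint : ∀ f : E3 → ℝ, Continuous f → IntegrableOn f (ball (0 : E3) 1) := fun f hf =>
    (hf.continuousOn.integrableOn_compact (isCompact_closedBall 0 1)).mono_set
      ball_subset_closedBall
  have hfd : ∀ a, Continuous (fun y => fderiv ℝ (g a) y (EuclideanSpace.single a 1)) := fun a =>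
    ((hg a).continuous_fderiv one_ne_zero).clm_apply continuous_const
  have h1 : ∀ y, 2 * fderiv ℝ V y y =
      ∑ a, 2 * inner ℝ y (EuclideanSpace.single a (1 : ℝ)) * g a y := by
    intro y
    have hy : y = ∑ a, y a • EuclideanSpace.single a (1 : ℝ) := by
      ext i; simp [Finset.sum_apply, Pi.single_apply]
    rw [congrArg (fderiv ℝ V y) hy, map_sum, Finset.mul_sum]
    refine Finset.sum_congr rfl fun a _ => ?_
    simp [hgdef, EuclideanSpace.inner_single_right]
    ring
  have h2 : 2 * ∫ y in ball (0 : E3) 1, fderiv ℝ V y y =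
      ∫ y in ball (0 : E3) 1, (1 - ‖y‖ ^ 2) *
        ∑ a, fderiv ℝ (g a) y (EuclideanSpace.single a 1) := by
    rw [← integral_const_mul]
    simp_rw [h1, Finset.mul_sum]
    rw [integral_finsetSum, integral_finsetSum]
    · exact Finset.sum_congr rfl fun a _ => integral_ball_mul_fderiv (hg a) (hgc a) _
    · intro a _
      exact hint _ (by have := hfd a; fun_prop)
    · intro a _
      exact hint _ (by have := (hg a).continuous; fun_prop)
  have h3 : 0 ≤ ∫ y in ball (0 : E3) 1, (1 - ‖y‖ ^ 2) *
        ∑ a, fderiv ℝ (g a) y (EuclideanSpace.single a 1) := by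
    refine setIntegral_nonneg measurableSet_ball fun y hy => mul_nonneg ?_ (hsub y hy)
    rw [mem_ball_zero_iff] at hy
    nlinarith [norm_nonneg y]
  linarith

lemma integral_ball_rescale (W : E3 → ℝ) (x : E3) {t : ℝ} (ht : 0 < t) :
    ∫ y in ball x t, W y = t ^ 3 * ∫ y in ball (0 : E3) 1, W (x + t • y) := by
  have h := Measure.setIntegral_comp_smul_of_pos (volume : Measure E3)
    (fun y => W (x + y)) (ball 0 1) ht
  rw [smul_unitBall_of_pos ht] at h
  have h2 : ∫ y in ball (0 : E3) t, W (x + y) = ∫ y in ball x t, W y := by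
    have := (measurePreserving_add_left (volume : Measure E3) x).setIntegral_preimage_emb
      (measurableEmbedding_addLeft x) W (ball x t)
    rw [← this]
    congr 2
    simp
  rw [h, h2]
  simp
  field_simp

/-- Averages of a subharmonic function over concentric balls increase with the radius. The
averages are written, up to the volume of the unit ball, as integrals over that fixed ball. -/
lemma mean_monotone {W : E3 → ℝ} (hW : ContDiff ℝ ∞ W) (hc : HasCompactSupport W) {x : E3}
    {r : ℝ} (hsub : ∀ y ∈ ball x r, 0 ≤ ∑ a : Fin 3, fderiv ℝ (fun z => fderiv ℝ W z
      (EuclideanSpace.single a 1)) y (EuclideanSpace.single a 1)) :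
    MonotoneOn (fun t : ℝ => ∫ y in ball (0 : E3) 1, W (x + t • y)) (Set.Icc 0 r) := by
  have hWd : Differentiable ℝ W := hW.differentiable (by simp)
  have hWf : Continuous (fderiv ℝ W) := hW.continuous_fderiv (by simp)
  obtain ⟨C, hC⟩ : ∃ C, ∀ z, ‖fderiv ℝ W z‖ ≤ C :=
    (hc.fderiv ℝ).exists_bound_of_continuous hWf
  have hint : ∀ f : E3 → ℝ, Continuous f → IntegrableOn f (ball (0 : E3) 1) := fun f hf =>
    (hf.continuousOn.integrableOn_compact (isCompact_closedBall 0 1)).mono_set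
      ball_subset_closedBall
  have hW0 : Continuous W := hW.continuous
  have hder : ∀ t : ℝ, HasDerivAt (fun t : ℝ => ∫ y in ball (0 : E3) 1, W (x + t • y))
      (∫ y in ball (0 : E3) 1, fderiv ℝ W (x + t • y) y) t := by
    intro t
    refine (hasDerivAt_integral_of_dominated_loc_of_deriv_le (𝕜 := ℝ) (s := Set.univ)
      (F := fun t y => W (x + t • y)) (F' := fun t y => fderiv ℝ W (x + t • y) y)
      (μ := volume.restrict (ball (0 : E3) 1))
      (bound := fun _ => C) Filter.univ_mem ?_ ?_ ?_ ?_ ?_ ?_).2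
    · exact Filter.Eventually.of_forall fun t =>
        (hint _ (by fun_prop)).aestronglyMeasurable
    · exact hint _ (by fun_prop)
    · exact (hint _ (by fun_prop)).aestronglyMeasurable
    · refine (ae_restrict_mem measurableSet_ball).mono fun y hy t _ => ?_
      rw [mem_ball_zero_iff] at hy
      refine ((fderiv ℝ W (x + t • y)).le_opNorm y).trans ?_
      have := hC (x + t • y)
      nlinarith [norm_nonneg y, norm_nonneg (fderiv ℝ W (x + t • y))]
    · exact hint _ continuous_const
    · refine Filter.Eventually.of_forall fun y t _ => ?_
      have h1 : HasDerivAt (fun t : ℝ => x + t • y) y t := by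
        simpa using ((hasDerivAt_id t).smul_const y).const_add x
      exact (hWd _).hasFDerivAt.comp_hasDerivAt t h1
  refine monotoneOn_of_deriv_nonneg (convex_Icc 0 r)
    (fun t _ => (hder t).continuousAt.continuousWithinAt)
    (fun t _ => (hder t).differentiableAt.differentiableWithinAt) fun t ht => ?_
  rw [interior_Icc] at ht
  rw [(hder t).deriv]
  obtain ⟨ht0, htr⟩ := ht
  set V : E3 → ℝ := fun y => W (x + t • y) with hVdef
  have hfV : ∀ {f : E3 → ℝ} (_ : Differentiable ℝ f) (y v : E3),
      fderiv ℝ (fun y => f (x + t • y)) y v = t * fderiv ℝ f (x + t • y) v := by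
    intro f hf y v
    have h1 : HasFDerivAt (fun y : E3 => x + t • y) (t • ContinuousLinearMap.id ℝ E3) y :=
      ((hasFDerivAt_id y).const_smul t).const_add x
    have := (hf (x + t • y)).hasFDerivAt.comp y h1
    have h3 := this.fderiv
    simp only [Function.comp_def] at h3
    rw [h3]
    simp
  have hV : ContDiff ℝ ∞ V := by fun_prop
  have hVc : HasCompactSupport V := by
    have := hc.comp_homeomorph ((Homeomorph.smulOfNeZero t ht0.ne').trans (Homeomorph.addLeft x))
    exact this
  -- The derivative at `t` is `t⁻¹` times the radial integral of the rescaled function `V`.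
  have hpos := integral_radial_nonneg hV hVc (by
    intro y hy
    have hmem : x + t • y ∈ ball x r := by
      rw [mem_ball_zero_iff] at hy
      rw [mem_ball, dist_eq_norm, add_sub_cancel_left, norm_smul, Real.norm_of_nonneg ht0.le]
      nlinarith [norm_nonneg y]
    have h := hsub _ hmem
    have : ∀ a : Fin 3, fderiv ℝ (fun z => fderiv ℝ V z (EuclideanSpace.single a 1)) y
        (EuclideanSpace.single a 1) = t ^ 2 * fderiv ℝ (fun z => fderiv ℝ W z
      (EuclideanSpace.single a 1)) (x + t • y) (EuclideanSpace.single a 1) := by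
      intro a
      have hd : Differentiable ℝ (fun z => fderiv ℝ W z (EuclideanSpace.single a 1)) :=
        ((hW.fderiv_right (m := ∞) (by simp)).clm_apply contDiff_const).differentiable (by simp)
      simp_rw [hVdef, hfV hWd]
      rw [fderiv_const_mul (by fun_prop), smul_apply, hfV hd, smul_eq_mul]
      ring
    simp_rw [this]
    rw [← Finset.mul_sum]
    positivity)
  simp_rw [hVdef, hfV hWd, integral_const_mul] at hpos
  exact nonneg_of_mul_nonneg_right hpos ht0

/-! ### Monotonicity of the energy -/

/-- Multiplying by a bump function that equals `1` on the ball turns a map smooth near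
`closedBall x r` into a globally smooth, compactly supported one, unchanged on `ball x r`. -/
lemma exists_global_extension {u : E3 → Quaternion ℝ} {U : Set E3} (hU : IsOpen U) {x : E3}
    {r : ℝ} (hr : 0 < r) (hball : closedBall x r ⊆ U) (hu : ContDiffOn ℝ ∞ u U) :
    ∃ w : E3 → Quaternion ℝ, ContDiff ℝ ∞ w ∧ HasCompactSupport w ∧
      ∀ y ∈ ball x r, ∀ a, pd w a y = pd u a y := by
  obtain ⟨δ, hδ, hδU⟩ := (isCompact_closedBall x r).exists_cthickening_subset_open hU hball
  rw [cthickening_closedBall hδ.le hr.le] at hδU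
  let χ : ContDiffBump x := ⟨r, δ + r, hr, by linarith⟩
  refine ⟨fun y => χ y • u y, ?_, ?_, ?_⟩
  · rw [contDiff_iff_contDiffAt]
    intro y
    by_cases hy : y ∈ closedBall x (δ + r)
    · exact χ.contDiff.contDiffAt.smul (hu.contDiffAt (hU.mem_nhds (hδU hy)))
    · have h0 : (fun y => χ y • u y) =ᶠ[nhds y] fun _ => 0 := by
        filter_upwards [isClosed_closedBall.isOpen_compl.mem_nhds hy] with z hz
        rw [Set.mem_compl_iff, mem_closedBall, not_le] at hz
        rw [χ.zero_of_le_dist hz.le, zero_smul]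
      exact contDiffAt_const.congr_of_eventuallyEq h0
  · exact χ.hasCompactSupport.smul_right
  · intro y hy a
    have h1 : (fun y => χ y • u y) =ᶠ[nhds y] u := by
      filter_upwards [isOpen_ball.mem_nhds hy] with z hz
      rw [χ.one_of_mem_closedBall (ball_subset_closedBall hz), one_smul]
    rw [pd, pd, h1.fderiv_eq]

/-- In fact `s⁻³ ∫_{B_s(x)} |du|²` is already monotone, being a sum of averages of subharmonic
functions; the weaker normalisation `s⁻¹` follows because the energy is nonnegative. -/
lemma energy_monotone {u : E3 → Quaternion ℝ} {U : Set E3} (hU : IsOpen U) {x : E3} {r s : ℝ}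
    (hball : closedBall x r ⊆ U) (hu : IsFueterOn u U) (hs : 0 < s) (hsr : s ≤ r) :
    (1 / s) * (∫ y in ball x s, eDensity u y) ≤ (1 / r) * ∫ y in ball x r, eDensity u y := by
  have hr : 0 < r := hs.trans_le hsr
  obtain ⟨w, hw, hwc, hwu⟩ := exists_global_extension hU hr hball hu.1
  have hF : ∀ y ∈ ball x r, qi * pd w 0 y + qj * pd w 1 y + qk * pd w 2 y = 0 := by
    intro y hy
    rw [hwu y hy, hwu y hy, hwu y hy]
    exact hu.2 y (hball (ball_subset_closedBall hy))
  have hdens : ∀ y ∈ ball x r, eDensity u y = ∑ b, ‖pd w b y‖ ^ 2 := by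
    intro y hy
    rw [Fin.sum_univ_three, hwu y hy, hwu y hy, hwu y hy, eDensity]
  have hsm : ∀ b, ContDiff ℝ ∞ (fun y => ‖pd w b y‖ ^ 2) := fun b =>
    (pd_contDiff hw b).norm_sq ℝ
  have hmono : ∀ b, MonotoneOn
      (fun t : ℝ => ∫ y in ball (0 : E3) 1, ‖pd w b (x + t • y)‖ ^ 2) (Set.Icc 0 r) := by
    intro b
    have hcs : HasCompactSupport (pd w b) := hwc.fderiv_apply ℝ _
    refine mean_monotone (hsm b) (hcs.comp_left (g := fun q => ‖q‖ ^ 2) (by simp))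
      fun y hy => laplace_normSq (pd_contDiff hw b) ?_
    -- Partial derivatives of a Fueter map are again Fueter, hence harmonic.
    refine laplace_zero (pd_contDiff hw b) isOpen_ball (fun z hz => ?_) hy
    rw [pd_comm hw b 0, pd_comm hw b 1, pd_comm hw b 2]
    exact pd_fueter_zero hw isOpen_ball hF hz b
  have hresc : ∀ t, 0 < t → t ≤ r → ∫ y in ball x t, eDensity u y =
      t ^ 3 * ∑ b, ∫ y in ball (0 : E3) 1, ‖pd w b (x + t • y)‖ ^ 2 := by
    intro t ht htr
    rw [setIntegral_congr_fun measurableSet_ball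
      (fun y hy => hdens y (ball_subset_ball htr hy)), integral_finsetSum]
    · rw [Finset.mul_sum]
      exact Finset.sum_congr rfl fun b _ => integral_ball_rescale _ x ht
    · exact fun b _ => ((hsm b).continuous.continuousOn.integrableOn_compact
        (isCompact_closedBall x t)).mono_set ball_subset_closedBall
  have hle : ∑ b, ∫ y in ball (0 : E3) 1, ‖pd w b (x + s • y)‖ ^ 2 ≤
      ∑ b, ∫ y in ball (0 : E3) 1, ‖pd w b (x + r • y)‖ ^ 2 :=
    Finset.sum_le_sum fun b _ => hmono b ⟨hs.le, hsr⟩ ⟨hr.le, le_rfl⟩ hsr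
  have h0 : 0 ≤ ∑ b, ∫ y in ball (0 : E3) 1, ‖pd w b (x + s • y)‖ ^ 2 :=
    Finset.sum_nonneg fun b _ => integral_nonneg fun y => by positivity
  rw [hresc s hs hsr, hresc r hr le_rfl]
  have e : ∀ t A : ℝ, 0 < t → 1 / t * (t ^ 3 * A) = t ^ 2 * A := by
    intro t A ht; field_simp
  rw [e s _ hs, e r _ hr]
  exact mul_le_mul (pow_le_pow_left₀ hs.le hsr 2) hle h0 (by positivity)

lemma radius_le_of_ball_subset {x y : E3} {s ρ : ℝ} (hs : 0 < s)
    (h : ball y s ⊆ ball x ρ) : s ≤ ρ := by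
  have hρ : 0 < ρ := pos_of_mem_ball (h (mem_ball_self hs))
  have h1 := measure_mono (μ := (volume : Measure E3)) h
  rw [Measure.addHaar_ball _ _ hs.le, Measure.addHaar_ball _ _ hρ.le] at h1
  have h2 := (ENNReal.mul_le_mul_iff_left (measure_ball_pos volume (0 : E3) one_pos).ne'
    measure_ball_lt_top.ne).1 h1
  rw [ENNReal.ofReal_le_ofReal_iff (by positivity)] at h2
  exact le_of_pow_le_pow_left₀ (by simp) hρ.le h2

/-- Corollary 2.3 of the paper in the flat case: (a) the renormalised energy
`s⁻¹ ∫_{B_s(x)} |du|²` is monotone in `s`, and (b) for `B_s(y) ⊆ B_{r/2}(x)` the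
renormalised energy on `B_s(y)` is controlled by that on `B_r(x)`. -/
theorem flat_monotonicity_corollary (u : E3 → Quaternion ℝ) (U : Set E3)
    (hUopen : IsOpen U) (x : E3) (r : ℝ) (hball : closedBall x r ⊆ U)
    (hu : IsFueterOn u U) :
    (∀ s : ℝ, 0 < s → s ≤ r →
      (1 / s) * (∫ y in ball x s, eDensity u y) ≤
        (1 / r) * ∫ y in ball x r, eDensity u y) ∧
    (∀ (y : E3) (s : ℝ), 0 < s → ball y s ⊆ ball x (r / 2) →
      (1 / s) * (∫ z in ball y s, eDensity u z) ≤
        (2 / r) * ∫ z in ball x r, eDensity u z) := by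
  refine ⟨fun s hs hsr => energy_monotone hUopen hball hu hs hsr, fun y s hs hsub => ?_⟩
  have hy : dist y x < r / 2 := hsub (mem_ball_self hs)
  have hr : 0 < r := by linarith [dist_nonneg (x := y) (y := x)]
  have hsr := radius_le_of_ball_subset hs hsub
  have hyU : closedBall y (r / 2) ⊆ U :=
    (closedBall_subset_closedBall' (by linarith)).trans hball
  refine (energy_monotone hUopen hyU hu hs hsr).trans ?_
  rw [one_div_div]
  refine mul_le_mul_of_nonneg_left ?_ (by positivity)
  have hpd : ∀ a, ContinuousOn (pd u a) U := fun a =>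
    (hu.1.continuousOn_fderiv_of_isOpen hUopen (by simp)).clm_apply continuousOn_const
  have hcont : ContinuousOn (eDensity u) U :=
    ((((hpd 0).norm.pow 2).add ((hpd 1).norm.pow 2)).add ((hpd 2).norm.pow 2))
  refine setIntegral_mono_set (((hcont.mono hball).integrableOn_compact
    (isCompact_closedBall x r)).mono_set ball_subset_closedBall) ?_ ?_
  · exact Filter.Eventually.of_forall fun z => by
      simp only [Pi.zero_apply, eDensity]; positivity
  · exact (ball_subset_ball' (by linarith)).eventuallyLE
end

section
/- Let (μᵢ) be a sequence of finite Borel measures on ℝ³ converging weakly to a finite Borel measure μ (i.e. ∫φ dμᵢ → ∫φ dμ for every bounded continuous φ : ℝ³ → ℝ). Suppose there are constants c > 0 and r₀ > 0 such that every μᵢ satisfies the almost-monotonicity inequality with constants c and r₀. Then μ also satisfies the almost-monotonicity inequality with constants c and r₀. -/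
/-! Rather than selecting radii whose spheres are null for `μ`, the proof compares balls with
continuous cutoffs. For `a < b` there is a bounded continuous `φ` with
`1_{B_a(x)} ≤ φ ≤ 1_{B_b(x)}`. Given `σ < s ≤ ρ < r`, take such cutoffs for the pairs `(σ, s)` and
`(ρ, r)`; the inequality for `μᵢ` at the radii `s ≤ ρ`, after passing to the limit in the two
integrals, gives
`e^{cs} s⁻¹ μ(B_σ(x)) ≤ e^{cρ} ρ⁻¹ μ(B_r(x)) + c ρ²`.
Letting `σ ↑ s` (continuity of `μ` from below, as the balls are open) and `ρ ↑ r` (continuity of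
the coefficients) yields the claim when `s < r`; when `s = r` it is trivial. -/

open MeasureTheory Metric Filter

/-- A finite Borel measure `μ` on `ℝ³` satisfies the almost-monotonicity inequality
with constants `c > 0` and `r₀ > 0` if for every `x` and all `0 < s ≤ r ≤ r₀`,
`e^{cs} s⁻¹ μ(B_s(x)) ≤ e^{cr} r⁻¹ μ(B_r(x)) + c r²`. -/
def AlmostMonotone (μ : Measure E3) (c r₀ : ℝ) : Prop :=
  ∀ (x : E3) (s r : ℝ), 0 < s → s ≤ r → r ≤ r₀ →
    Real.exp (c * s) * s⁻¹ * (μ (ball x s)).toReal ≤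
      Real.exp (c * r) * r⁻¹ * (μ (ball x r)).toReal + c * r ^ 2

/-- A single continuous cutoff between two concentric balls sandwiches its integral between the
masses of these balls, for all finite measures at once. -/
lemma exists_cutoff_s8 (x : E3) {a b : ℝ} (hab : a < b) :
    ∃ φ : BoundedContinuousFunction E3 ℝ, ∀ ν : Measure E3, IsFiniteMeasure ν →
      (ν (ball x a)).toReal ≤ ∫ y, φ y ∂ν ∧ ∫ y, φ y ∂ν ≤ (ν (ball x b)).toReal := by
  have hdisj : Disjoint (ball x b)ᶜ (closedBall x a) :=
    Set.disjoint_compl_left_iff_subset.2 (closedBall_subset_ball hab)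
  obtain ⟨φ, h0, h1, h01⟩ :=
    exists_bounded_zero_one_of_closed (isOpen_ball.isClosed_compl) isClosed_closedBall hdisj
  refine ⟨φ, fun ν hν => ?_⟩
  have key : ∀ t : ℝ, (ν (ball x t)).toReal = ∫ y, (ball x t).indicator (fun _ => (1 : ℝ)) y ∂ν :=
    fun t => by rw [integral_indicator_const _ measurableSet_ball]; simp [Measure.real]
  have hint : ∀ t : ℝ, Integrable ((ball x t).indicator (fun _ => (1 : ℝ))) ν :=
    fun t => (integrable_const _).indicator measurableSet_ball
  rw [key, key]
  refine ⟨integral_mono (hint a) (φ.integrable ν) fun y => ?_,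
    integral_mono (φ.integrable ν) (hint b) fun y => ?_⟩
  · refine Set.indicator_apply_le' (fun hy => ?_) fun _ => (h01 y).1
    exact (h1 (ball_subset_closedBall hy)).ge
  · by_cases hy : y ∈ ball x b
    · simpa [Set.indicator_of_mem hy] using (h01 y).2
    · simpa [Set.indicator_of_notMem hy] using (h0 hy).le

/-- Bounds on `μ(B_σ(x))` for all `σ < s` pass to `μ(B_s(x))`, since `μ` is continuous from below
and the open ball `B_s(x)` is the increasing union of the `B_σ(x)`. -/
lemma le_of_forall_ball_le (μ : Measure E3) [IsFiniteMeasure μ] (x : E3) (s A M : ℝ)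
    (h : ∀ σ < s, A * (μ (ball x σ)).toReal ≤ M) : A * (μ (ball x s)).toReal ≤ M := by
  obtain ⟨u, hu, hus, hlim⟩ := exists_seq_strictMono_tendsto s
  have hU : ⋃ n, ball x (u n) = ball x s := by
    refine Set.Subset.antisymm (Set.iUnion_subset fun n => ball_subset_ball (hus n).le) ?_
    intro y hy
    obtain ⟨n, hn⟩ := (hlim.eventually (lt_mem_nhds (mem_ball.1 hy))).exists
    exact Set.mem_iUnion.2 ⟨n, hn⟩
  have hmono : Monotone fun n => ball x (u n) := fun m n hmn => ball_subset_ball (hu.monotone hmn)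
  have ht := tendsto_measure_iUnion_atTop (μ := μ) hmono
  rw [hU] at ht
  exact le_of_tendsto
    (((ENNReal.tendsto_toReal (measure_ne_top μ _)).comp ht).const_mul A)
    (Eventually.of_forall fun n => h (u n) (hus n))

/-- Step 1 of the proof of Proposition 6.1 of the paper: the almost-monotonicity
inequality passes to weak limits of finite Borel measures. -/
theorem almostMonotone_of_weak_limit (μseq : ℕ → Measure E3) (μ : Measure E3)
    (hfin : ∀ i, IsFiniteMeasure (μseq i)) (hfinμ : IsFiniteMeasure μ)
    (hweak : ∀ φ : BoundedContinuousFunction E3 ℝ,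
      Tendsto (fun i => ∫ x, φ x ∂(μseq i)) atTop (nhds (∫ x, φ x ∂μ)))
    (c r₀ : ℝ) (hc : 0 < c) (hr₀ : 0 < r₀)
    (hAM : ∀ i, AlmostMonotone (μseq i) c r₀) :
    AlmostMonotone μ c r₀ := by
  intro x s r hs hsr hr
  rcases hsr.eq_or_lt with rfl | hlt
  · have : 0 ≤ c * s ^ 2 := by positivity
    linarith
  refine le_of_forall_ball_le μ x s _ _ fun σ hσ => ?_
  obtain ⟨φ, hφ⟩ := exists_cutoff_s8 x hσ
  have hρ : ∀ ρ ∈ Set.Ico s r, Real.exp (c * s) * s⁻¹ * (μ (ball x σ)).toReal ≤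
      Real.exp (c * ρ) * ρ⁻¹ * (μ (ball x r)).toReal + c * ρ ^ 2 := by
    rintro ρ ⟨hsρ, hρr⟩
    have hρ0 : 0 < ρ := hs.trans_le hsρ
    obtain ⟨ψ, hψ⟩ := exists_cutoff_s8 x hρr
    have hlim : Real.exp (c * s) * s⁻¹ * ∫ y, φ y ∂μ ≤
        Real.exp (c * ρ) * ρ⁻¹ * (∫ y, ψ y ∂μ) + c * ρ ^ 2 := by
      refine le_of_tendsto_of_tendsto' ((hweak φ).const_mul _)
        (((hweak ψ).const_mul _).add_const _) fun i => ?_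
      calc _ ≤ Real.exp (c * s) * s⁻¹ * (μseq i (ball x s)).toReal := by
            gcongr; exact (hφ _ (hfin i)).2
        _ ≤ Real.exp (c * ρ) * ρ⁻¹ * (μseq i (ball x ρ)).toReal + c * ρ ^ 2 :=
            hAM i x s ρ hs hsρ (hρr.le.trans hr)
        _ ≤ _ := by gcongr; exact (hψ _ (hfin i)).1
    calc _ ≤ Real.exp (c * s) * s⁻¹ * ∫ y, φ y ∂μ := by gcongr; exact (hφ μ hfinμ).1
      _ ≤ _ := hlim
      _ ≤ _ := by gcongr; exact (hψ μ hfinμ).2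
  have hcont : ContinuousAt (fun ρ : ℝ =>
      Real.exp (c * ρ) * ρ⁻¹ * (μ (ball x r)).toReal + c * ρ ^ 2) r := by
    have hr0 : r ≠ 0 := (hs.trans hlt).ne'
    fun_prop (disch := assumption)
  have hleft := hcont.tendsto.mono_left (nhdsWithin_le_nhds (s := Set.Iio r))
  refine ge_of_tendsto hleft ?_
  filter_upwards [Ico_mem_nhdsLT hlt] with ρ h using hρ ρ h
end

section
/- Let μ be a finite Borel measure on ℝ³ satisfying the almost-monotonicity inequality with constants c > 0 and r₀ > 0, and define Θ(x) := lim_{r ↓ 0} r⁻¹ μ(B_r(x)) (which exists for every x). Then Θ : ℝ³ → [0,∞) is upper semi-continuous: for every sequence xᵢ → x one has limsup_{i→∞} Θ(xᵢ) ≤ Θ(x). -/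
/-!
The density is controlled at a fixed scale: letting `s ↓ 0` in the almost-monotonicity inequality
gives `Θ y ≤ e^{cr} r⁻¹ μ(B_r(y)) + c r²` for every `y` and every `0 < r ≤ r₀` (`density_le_scale`).
If `|y - x| < r²`, then `B_r(y) ⊆ B_{r+r²}(x)`, so the right-hand side is at most
`e^{cr} (1 + r) (r + r²)⁻¹ μ(B_{r+r²}(x)) + c r²`. This bound is uniform in such `y` and tends to
`Θ x` as `r ↓ 0`, because `r² = o(r)`; upper semicontinuity at `x` follows.
The `limsup` form uses in addition that `Θ ≥ 0`, which makes the real-valued `limsup` meaningful.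
-/

open MeasureTheory Metric Filter

/-- The limit `s ↓ 0` of the almost-monotonicity inequality. -/
lemma density_le_scale {μ : Measure E3} {c r₀ : ℝ} (hAM : AlmostMonotone μ c r₀) {y : E3} {θ : ℝ}
    (hθ : Tendsto (fun r : ℝ => r⁻¹ * (μ (ball y r)).toReal)
      (nhdsWithin 0 (Set.Ioi 0)) (nhds θ))
    {r : ℝ} (hr : 0 < r) (hr₀ : r ≤ r₀) :
    θ ≤ Real.exp (c * r) * r⁻¹ * (μ (ball y r)).toReal + c * r ^ 2 := by
  have hexp : Tendsto (fun s : ℝ => Real.exp (c * s)) (nhdsWithin 0 (Set.Ioi 0)) (nhds 1) := by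
    have h : Continuous fun s : ℝ => Real.exp (c * s) := by fun_prop
    simpa using (h.tendsto 0).mono_left nhdsWithin_le_nhds
  have hlim := hexp.mul hθ
  rw [one_mul] at hlim
  refine le_of_tendsto hlim ?_
  filter_upwards [Ioc_mem_nhdsGT hr] with s hs
  simpa only [mul_assoc] using hAM y s r hs.1 hs.2 hr₀

/-- The uniform upper bound for the density near `x` converges to the density at `x`. -/
lemma tendsto_scale_bound {μ : Measure E3} (c : ℝ) {x : E3} {θ : ℝ}
    (hθ : Tendsto (fun r : ℝ => r⁻¹ * (μ (ball x r)).toReal)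
      (nhdsWithin 0 (Set.Ioi 0)) (nhds θ)) :
    Tendsto (fun r : ℝ => Real.exp (c * r) * (1 + r) *
        ((r + r ^ 2)⁻¹ * (μ (ball x (r + r ^ 2))).toReal) + c * r ^ 2)
      (nhdsWithin 0 (Set.Ioi 0)) (nhds θ) := by
  have hscale : Tendsto (fun r : ℝ => r + r ^ 2) (nhdsWithin 0 (Set.Ioi 0))
      (nhdsWithin 0 (Set.Ioi 0)) := by
    refine tendsto_nhdsWithin_iff.2 ⟨?_, ?_⟩
    · have h : Continuous fun r : ℝ => r + r ^ 2 := by fun_prop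
      simpa using (h.tendsto 0).mono_left nhdsWithin_le_nhds
    · filter_upwards [self_mem_nhdsWithin] with r (hr : 0 < r)
      exact Set.mem_Ioi.2 (by positivity)
  have hfactor : Tendsto (fun r : ℝ => Real.exp (c * r) * (1 + r))
      (nhdsWithin 0 (Set.Ioi 0)) (nhds 1) := by
    have h : Continuous fun r : ℝ => Real.exp (c * r) * (1 + r) := by fun_prop
    simpa using (h.tendsto 0).mono_left nhdsWithin_le_nhds
  have herror : Tendsto (fun r : ℝ => c * r ^ 2) (nhdsWithin 0 (Set.Ioi 0)) (nhds 0) := by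
    have h : Continuous fun r : ℝ => c * r ^ 2 := by fun_prop
    simpa using (h.tendsto 0).mono_left nhdsWithin_le_nhds
  simpa using (hfactor.mul (hθ.comp hscale)).add herror

/-- Step 2 of the proof of Proposition 6.1 of the paper: the one-dimensional density
`Θ(x) = lim_{r ↓ 0} r⁻¹ μ(B_r(x))` of a finite Borel measure satisfying the
almost-monotonicity inequality is upper semi-continuous; in particular, along every
convergent sequence `xᵢ → x` one has `limsup Θ(xᵢ) ≤ Θ(x)`. -/
theorem density_upperSemicontinuous (μ : Measure E3) (hfin : IsFiniteMeasure μ)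
    (c r₀ : ℝ) (hc : 0 < c) (hr₀ : 0 < r₀) (hAM : AlmostMonotone μ c r₀)
    (Θ : E3 → ℝ)
    (hΘ : ∀ x, Tendsto (fun r : ℝ => r⁻¹ * (μ (ball x r)).toReal)
      (nhdsWithin 0 (Set.Ioi 0)) (nhds (Θ x))) :
    UpperSemicontinuous Θ ∧
      ∀ (x : E3) (xi : ℕ → E3), Tendsto xi atTop (nhds x) →
        limsup (fun i => Θ (xi i)) atTop ≤ Θ x := by
  have husc : UpperSemicontinuous Θ := by
    intro x a ha
    obtain ⟨r, hra, hr, hrr₀⟩ := (((tendsto_scale_bound c (hΘ x)).eventually_lt_const ha).and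
      (Ioc_mem_nhdsGT hr₀)).exists
    filter_upwards [ball_mem_nhds x (show 0 < r ^ 2 by positivity)] with y hy
    refine lt_of_le_of_lt ?_ hra
    refine (density_le_scale hAM (hΘ y) hr hrr₀).trans ?_
    have hsub : ball y r ⊆ ball x (r + r ^ 2) :=
      ball_subset_ball' (by linarith [mem_ball.1 hy])
    have hmono : (μ (ball y r)).toReal ≤ (μ (ball x (r + r ^ 2))).toReal :=
      ENNReal.toReal_mono (measure_ne_top μ _) (measure_mono hsub)
    have hinv : (1 + r) * (r + r ^ 2)⁻¹ = r⁻¹ := by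
      have : 1 + r ≠ 0 := by positivity
      have : r + r ^ 2 ≠ 0 := by positivity
      field_simp
    calc Real.exp (c * r) * r⁻¹ * (μ (ball y r)).toReal + c * r ^ 2
        ≤ Real.exp (c * r) * r⁻¹ * (μ (ball x (r + r ^ 2))).toReal + c * r ^ 2 := by gcongr
      _ = _ := by rw [← hinv]; ring
  have hnonneg : ∀ y, 0 ≤ Θ y := fun y => by
    refine ge_of_tendsto (hΘ y) ?_
    filter_upwards [self_mem_nhdsWithin] with r (hr : 0 < r)
    positivity
  refine ⟨husc, fun x xi hxi => le_of_forall_gt_imp_ge_of_dense fun a ha => ?_⟩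
  have hcob : IsCoboundedUnder (· ≤ ·) atTop fun i => Θ (xi i) :=
    IsBoundedUnder.isCoboundedUnder_le (isBoundedUnder_of ⟨0, fun i => hnonneg (xi i)⟩)
  exact limsup_le_of_le hcob ((hxi.eventually (husc x a ha)).mono fun i hi => hi.le)
end

section
/- There is a universal constant κ > 0 with the following property. Let C, ε₀, r₀ > 0, let (wᵢ) be a sequence of nonnegative measurable functions on ℝ³ with ∫_{ℝ³} wᵢ ≤ C for every i, and let S ⊆ ℝ³ be a set such that for every x ∈ S and every r ∈ (0, r₀] one has liminf_{i→∞} (1/r) ∫_{B_r(x)} wᵢ ≥ ε₀. Then the 1-dimensional Hausdorff measure of S satisfies H¹(S) ≤ κ C / ε₀; in particular H¹(S) < ∞. -/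
/-!
The constant `κ = 8` works. Fix a scale `r ≤ r₀`. By the Vitali covering lemma there is a subset
`u ⊆ S` whose closed `r`-balls are pairwise disjoint and whose concentric closed `4r`-balls
cover `S`; `u` is countable because disjoint balls contain disjoint nonempty open sets. Each ball
carries, in the limit, mass at least `ε₀ r`, and by disjointness the total mass over all balls is
at most `C` for every `i`. Fatou's lemma for the counting measure on `u` lets the limit pass
through the (possibly infinite) sum, so `∑_{b ∈ u} ε₀ ≤ r⁻¹ C`. The covering balls have diameter
at most `8r`, hence `∑ diam ≤ 8 C / ε₀`, and letting `r → 0` bounds the Hausdorff measure.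
-/

open MeasureTheory Metric Filter

/-- Superadditivity of `liminf` over a countable sum: Fatou's lemma for the counting measure. -/
lemma tsum_liminf_le_liminf_tsum {β : Type*} [MeasurableSpace β] [MeasurableSingletonClass β]
    [Countable β] (a : ℕ → β → ENNReal) :
    ∑' b, liminf (fun i => a i b) atTop ≤ liminf (fun i => ∑' b, a i b) atTop := by
  simpa only [lintegral_count] using
    lintegral_liminf_le (μ := Measure.count) (f := a) fun i => measurable_of_countable (a i)

/-- The covering at a single scale `r`: countably many closed balls of radius `4r` cover `S`, and
they are few, the number of centres counted with weight `ε₀` being at most `r⁻¹ C`. -/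
lemma exists_countable_cover_of_density {C ε : ENNReal} {r : ℝ} (hr : 0 < r)
    {w : ℕ → E3 → ENNReal} (hC : ∀ i, ∫⁻ x, w i x ≤ C) {S : Set E3}
    (hS : ∀ x ∈ S, ε ≤
      liminf (fun i => (ENNReal.ofReal r)⁻¹ * ∫⁻ y in ball x r, w i y) atTop) :
    ∃ u : Set E3, u.Countable ∧ S ⊆ ⋃ b : u, closedBall (b : E3) (4 * r) ∧
      ∑' _ : u, ε ≤ (ENNReal.ofReal r)⁻¹ * C := by
  obtain ⟨u, huS, hdisj, hcov⟩ :=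
    Vitali.exists_disjoint_subfamily_covering_enlargement_closedBall S id (fun _ => r) r
      (fun _ _ => le_rfl) 4 (by norm_num)
  have hdisj' : u.PairwiseDisjoint fun a => ball a r :=
    hdisj.mono fun a => ball_subset_closedBall
  have hu : u.Countable :=
    hdisj'.countable_of_isOpen (fun _ _ => isOpen_ball) fun a _ => nonempty_ball.2 hr
  refine ⟨u, hu, fun x hx => ?_, ?_⟩
  · obtain ⟨b, hb, hsub⟩ := hcov x hx
    exact Set.mem_iUnion.2 ⟨⟨b, hb⟩, hsub (mem_closedBall_self hr.le)⟩
  · have : Countable u := hu.to_subtype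
    have hmass : ∀ i, ∑' b : u, (ENNReal.ofReal r)⁻¹ * ∫⁻ y in ball (b : E3) r, w i y
        ≤ (ENNReal.ofReal r)⁻¹ * C := fun i => by
      rw [ENNReal.tsum_mul_left, ← lintegral_biUnion hu (fun _ _ => measurableSet_ball) hdisj']
      gcongr
      exact (setLIntegral_le_lintegral _ _).trans (hC i)
    calc ∑' _ : u, ε
        ≤ ∑' b : u, liminf
            (fun i => (ENNReal.ofReal r)⁻¹ * ∫⁻ y in ball (b : E3) r, w i y) atTop :=
          ENNReal.tsum_le_tsum fun b => hS b (huS b.2)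
      _ ≤ liminf (fun i => ∑' b : u,
            (ENNReal.ofReal r)⁻¹ * ∫⁻ y in ball (b : E3) r, w i y) atTop :=
          tsum_liminf_le_liminf_tsum _
      _ ≤ liminf (fun _ : ℕ => (ENNReal.ofReal r)⁻¹ * C) atTop :=
          liminf_le_liminf (Eventually.of_forall hmass)
      _ = (ENNReal.ofReal r)⁻¹ * C := liminf_const _

/-- Finiteness of the 1-dimensional Hausdorff measure of the blow-up locus
(part of Proposition 4.2 of the paper): if `(wᵢ)` is a sequence of nonnegative
measurable functions on `ℝ³` with `∫ wᵢ ≤ C` and every point of `S` satisfies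
`liminfᵢ r⁻¹ ∫_{B_r(x)} wᵢ ≥ ε₀` for all `r ∈ (0, r₀]`, then `H¹(S) ≤ κ C / ε₀`
for a universal constant `κ`. -/
theorem blowup_locus_finite_H1 :
    ∃ κ > (0:ℝ), ∀ (C ε₀ r₀ : ℝ), 0 < C → 0 < ε₀ → 0 < r₀ →
      ∀ w : ℕ → E3 → ENNReal, (∀ i, Measurable (w i)) →
        (∀ i, ∫⁻ x, w i x ≤ ENNReal.ofReal C) →
        ∀ S : Set E3,
          (∀ x ∈ S, ∀ r : ℝ, 0 < r → r ≤ r₀ →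
            ENNReal.ofReal ε₀ ≤
              liminf (fun i => (ENNReal.ofReal r)⁻¹ * ∫⁻ y in ball x r, w i y) atTop) →
          μH[1] S ≤ ENNReal.ofReal (κ * C / ε₀) := by
  refine ⟨8, by norm_num, fun C ε₀ r₀ hC hε hr₀ w _ hwC S hS => ?_⟩
  set ρ : ℕ → ℝ := fun n => r₀ / (n + 1) with hρ
  have hρ_pos : ∀ n, 0 < ρ n := fun n => by positivity
  have hρ_le : ∀ n, ρ n ≤ r₀ := fun n =>
    div_le_self hr₀.le (le_add_of_nonneg_left n.cast_nonneg)
  choose u hu hcov hsum using fun n =>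
    exists_countable_cover_of_density (hρ_pos n) hwC fun x hx => hS x hx _ (hρ_pos n) (hρ_le n)
  have : ∀ n, Countable (u n) := fun n => (hu n).to_subtype
  have hdiam : ∀ n (b : u n),
      ediam (closedBall (b : E3) (4 * ρ n)) ≤ ENNReal.ofReal (8 * ρ n) := fun n b => by
    refine ediam_le_of_forall_dist_le fun x hx y hy => ?_
    linarith [dist_triangle_right x y (b : E3), mem_closedBall.1 hx, mem_closedBall.1 hy]
  have hlim : Tendsto (fun n => ENNReal.ofReal (8 * ρ n)) atTop (nhds 0) := by
    have h : Tendsto ρ atTop (nhds 0) := by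
      simpa [hρ, div_eq_mul_inv] using
        (tendsto_one_div_add_atTop_nhds_zero_nat (𝕜 := ℝ)).const_mul r₀
    simpa using ENNReal.tendsto_ofReal (h.const_mul 8)
  have htotal : ∀ n, ∑' b : u n, ediam (closedBall (b : E3) (4 * ρ n)) ^ (1 : ℝ)
      ≤ ENNReal.ofReal (8 * C / ε₀) := fun n => by
    have hfactor : ENNReal.ofReal (8 * ρ n) =
        ENNReal.ofReal (8 * ρ n / ε₀) * ENNReal.ofReal ε₀ := by
      rw [← ENNReal.ofReal_mul (by have := hρ_pos n; positivity), div_mul_cancel₀ _ hε.ne']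
    calc ∑' b : u n, ediam (closedBall (b : E3) (4 * ρ n)) ^ (1 : ℝ)
        ≤ ∑' _ : u n, ENNReal.ofReal (8 * ρ n) :=
          ENNReal.tsum_le_tsum fun b => by simpa only [ENNReal.rpow_one] using hdiam n b
      _ = ENNReal.ofReal (8 * ρ n / ε₀) * ∑' _ : u n, ENNReal.ofReal ε₀ := by
          rw [← ENNReal.tsum_mul_left, ← hfactor]
      _ ≤ ENNReal.ofReal (8 * ρ n / ε₀) * ((ENNReal.ofReal (ρ n))⁻¹ * ENNReal.ofReal C) := by
          gcongr
          exact hsum n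
      _ = ENNReal.ofReal (8 * C / ε₀) := by
          have := hρ_pos n
          rw [← ENNReal.ofReal_inv_of_pos this, ← ENNReal.ofReal_mul (by positivity),
            ← ENNReal.ofReal_mul (by positivity)]
          congr 1
          field_simp
  calc μH[1] S
      ≤ liminf (fun n => ∑' b : u n, ediam (closedBall (b : E3) (4 * ρ n)) ^ (1 : ℝ)) atTop :=
        Measure.hausdorffMeasure_le_liminf_tsum 1 S _ hlim _
          (Eventually.of_forall hdiam) (Eventually.of_forall hcov)
    _ ≤ liminf (fun _ : ℕ => ENNReal.ofReal (8 * C / ε₀)) atTop :=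
        liminf_le_liminf (Eventually.of_forall htotal)
    _ = ENNReal.ofReal (8 * C / ε₀) := liminf_const _
end
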